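/- arXiv:1909.03927 — 7 statements merged into one kernel-verified Lean document; each statement's English description precedes it below -/
import Mathlib

section
/- For every integer n ≥ 7, the alternating group A_n admits a Beauville structure {(x₁,y₁),(x₂,y₂)} that is not strongly real, i.e. for which there exist no automorphism φ of A_n and elements g₁, g₂ ∈ A_n with gᵢφ(xᵢ)gᵢ⁻¹ = xᵢ⁻¹ and gᵢφ(yᵢ)gᵢ⁻¹ = yᵢ⁻¹ for i = 1, 2. -/
/-- `beauvilleSigma x y` is Σ(x,y): the set of all conjugates of all powers of
`x`, `y` and `x*y` in the group `G`. -/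
def beauvilleSigma {G : Type*} [Group G] (x y : G) : Set G :=
  {a | ∃ (i : ℕ) (g : G),
      a = g * x ^ i * g⁻¹ ∨ a = g * y ^ i * g⁻¹ ∨ a = g * (x * y) ^ i * g⁻¹}

/-- `{(x₁,y₁),(x₂,y₂)}` is a Beauville structure for `G`:
both pairs generate `G` and `Σ(x₁,y₁) ∩ Σ(x₂,y₂) = {1}`. -/
def IsBeauvilleStructure {G : Type*} [Group G] (x₁ y₁ x₂ y₂ : G) : Prop :=
  Subgroup.closure {x₁, y₁} = ⊤ ∧ Subgroup.closure {x₂, y₂} = ⊤ ∧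
    beauvilleSigma x₁ y₁ ∩ beauvilleSigma x₂ y₂ = {1}

/-- A Beauville structure `{(x₁,y₁),(x₂,y₂)}` is strongly real if there are an
automorphism `φ` of `G` and elements `g₁ g₂ : G` with
`gᵢ * φ xᵢ * gᵢ⁻¹ = xᵢ⁻¹` and `gᵢ * φ yᵢ * gᵢ⁻¹ = yᵢ⁻¹` for `i = 1, 2`. -/
def IsStronglyRealStructure {G : Type*} [Group G] (x₁ y₁ x₂ y₂ : G) : Prop :=
  ∃ (φ : G ≃* G) (g₁ g₂ : G),
    g₁ * φ x₁ * g₁⁻¹ = x₁⁻¹ ∧ g₁ * φ y₁ * g₁⁻¹ = y₁⁻¹ ∧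
    g₂ * φ x₂ * g₂⁻¹ = x₂⁻¹ ∧ g₂ * φ y₂ * g₂⁻¹ = y₂⁻¹


namespace BeauvilleAux

open Equiv Equiv.Perm

/-- Jordan-type criterion: a subgroup whose three-cycles are connected contains `A_n`. -/
theorem alt_le_of_connected {α : Type*} [Fintype α] [DecidableEq α] (H : Subgroup (Perm α))
    {c : Perm α} (hc : c.IsThreeCycle) (hcH : c ∈ H)
    (hconn : ∀ B : Set α, B.Nonempty →
      (∀ g ∈ H, g.IsThreeCycle → ∀ a ∈ B, ∀ b, g a ≠ a → g b ≠ b → b ∈ B) → B = Set.univ) :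
    alternatingGroup α ≤ H := by
  have key : ∀ g : Perm α, g.IsThreeCycle → ∀ a b, g a ≠ a → g b ≠ b → ∃ k : ℤ, (g ^ k) a = b :=
    fun g hg a b ha hb => (hg.isCycle.sameCycle ha hb)
  have htrans : MulAction.IsPretransitive H α := by
    constructor
    intro a b
    have h := hconn (MulAction.orbit H a) ⟨a, MulAction.mem_orbit_self a⟩ (by
      intro g hg h3 z hz w hgz hgw
      obtain ⟨k, hk⟩ := key g h3 z w hgz hgw
      rw [← hk]
      have := (MulAction.mem_orbit_iff).1 hz
      obtain ⟨h, rfl⟩ := this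
      exact ⟨⟨g ^ k, H.zpow_mem hg k⟩ * h, by simp [mul_smul, Subgroup.smul_def]⟩)
    have : b ∈ MulAction.orbit H a := by rw [h]; trivial
    obtain ⟨h, hh⟩ := this
    exact ⟨h, hh⟩
  have hprim : MulAction.IsPreprimitive H α := by
    constructor
    intro B hB
    by_cases hs : B.Subsingleton
    · exact Or.inl hs
    right
    rw [Set.not_subsingleton_iff] at hs
    refine hconn B hs.nonempty ?_
    intro g hg h3 a ha b hga hgb
    obtain ⟨a', ha', hne⟩ := hs.exists_ne a
    have hpow : ∀ k : ℤ, ∀ z ∈ B, (g ^ k) z ∈ B → ∀ w ∈ B, (g ^ k) w ∈ B := by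
      intro k z hz hkz w hw
      have h1 := (MulAction.isBlock_iff_smul_eq_of_mem.1 hB)
        (g := (⟨g ^ k, H.zpow_mem hg k⟩ : H)) hz hkz
      rw [← h1]
      exact ⟨w, hw, rfl⟩
    have hg1 : ∀ w ∈ B, g w ∈ B := by
      by_cases hga' : g a' = a'
      · simpa using hpow 1 a' ha' (by simpa [hga'] using ha')
      · have h3' : g ^ 3 = 1 := by rw [← h3.orderOf]; exact pow_orderOf_eq_one g
        obtain ⟨k, hk⟩ := key g h3 a a' hga hga'
        have hk' := hpow k a ha (by rw [hk]; exact ha')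
        have hz3 : g ^ (3:ℤ) = 1 := by exact_mod_cast h3'
        obtain ⟨q, hq | hq | hq⟩ : ∃ q : ℤ, k = 3 * q ∨ k = 3 * q + 1 ∨ k = 3 * q + 2 :=
          ⟨k / 3, by omega⟩
        · exfalso; apply hne
          rw [← hk, hq, zpow_mul, hz3]; simp
        · have : g ^ k = g := by rw [hq, zpow_add, zpow_mul, hz3]; simp
          simpa [this] using hk'
        · have h2 : g ^ k = g ^ 2 := by
            rw [hq, zpow_add, zpow_mul, hz3]; simp
          intro w hw
          have := hk' _ (hk' w hw)
          rw [h2, ← Perm.mul_apply, ← pow_add] at this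
          rw [show 2 + 2 = 3 + 1 from rfl, pow_succ, h3'] at this
          simpa using this
    obtain ⟨k, hk⟩ := key g h3 a b hga hgb
    have hn : ∀ j : ℕ, (g ^ j) a ∈ B := by
      intro j
      induction j with
      | zero => simpa using ha
      | succ j ih => rw [pow_succ', Perm.mul_apply]; exact hg1 _ ih
    obtain ⟨j, -, hj⟩ := (h3.isCycle.sameCycle hga hgb).exists_pow_eq'
    rw [← hj]; exact hn j
  exact alternatingGroup_le_of_isPreprimitive_of_isThreeCycle_mem hprim hc hcH

/-- A pair generating the alternating group with controlled support sizes. -/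
structure GoodPair {α : Type*} [Fintype α] [DecidableEq α] (C : Set ℕ) (x y : Perm α) : Prop where
  sx : sign x = 1
  sy : sign y = 1
  gen : alternatingGroup α ≤ Subgroup.closure {x, y}
  px : ∀ k : ℕ, x ^ k = 1 ∨ (x ^ k).support.card ∈ C
  py : ∀ k : ℕ, y ^ k = 1 ∨ (y ^ k).support.card ∈ C
  pxy : ∀ k : ℕ, (x * y) ^ k = 1 ∨ ((x * y) ^ k).support.card ∈ C

/-- The word detecting chirality. -/
def chiralWord {G : Type*} [Group G] (x y : G) : G := (y * y * (x * y * x⁻¹)) ^ 35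

theorem map_chiralWord {G H : Type*} [Group G] [Group H] (f : G →* H) (x y : G) :
    f (chiralWord x y) = chiralWord (f x) (f y) := by
  simp [chiralWord]

theorem card_support_permCongr {α β : Type*} [Fintype α] [DecidableEq α] [Fintype β]
    [DecidableEq β] (e : α ≃ β) (g : Perm α) :
    (e.permCongr g).support.card = g.support.card := by
  have : (e.permCongr g).support = g.support.map e.toEmbedding := by
    ext b
    simp [Equiv.permCongr_apply, ← Equiv.eq_symm_apply]
  rw [this, Finset.card_map]

theorem GoodPair.exists_fin {α : Type*} [Fintype α] [DecidableEq α] {C : Set ℕ} {x y : Perm α}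
    (h : GoodPair C x y) {n : ℕ} (hn : Fintype.card α = n) :
    ∃ X Y : alternatingGroup (Fin n), Subgroup.closure {X, Y} = ⊤ ∧
      (∀ g ∈ ({a | ∃ (i : ℕ) (g : alternatingGroup (Fin n)),
      a = g * X ^ i * g⁻¹ ∨ a = g * Y ^ i * g⁻¹ ∨ a = g * (X * Y) ^ i * g⁻¹} : Set _),
        g = 1 ∨ (g : Perm (Fin n)).support.card ∈ C) ∧
      (chiralWord x y = 1 → chiralWord X Y = 1) ∧
      (chiralWord x⁻¹ y⁻¹ ≠ 1 → chiralWord X⁻¹ Y⁻¹ ≠ 1) := by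
  let e : α ≃ Fin n := Fintype.equivFinOfCardEq hn
  let f : Perm α ≃* Perm (Fin n) := e.permCongrHom
  have hf : ∀ g, (f g).support.card = g.support.card := fun g => card_support_permCongr e g
  have hs : ∀ g, sign (f g) = sign g := fun g => by
    exact Equiv.Perm.sign_permCongr e g
  let X : alternatingGroup (Fin n) := ⟨f x, by rw [mem_alternatingGroup, hs, h.sx]⟩
  let Y : alternatingGroup (Fin n) := ⟨f y, by rw [mem_alternatingGroup, hs, h.sy]⟩
  have hinj : Function.Injective (alternatingGroup (Fin n)).subtype :=
    Subgroup.subtype_injective _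
  have hX : (alternatingGroup (Fin n)).subtype X = f x := rfl
  have hY : (alternatingGroup (Fin n)).subtype Y = f y := rfl
  refine ⟨X, Y, ?_, ?_, ?_, ?_⟩
  · rw [← (Subgroup.map_injective hinj).eq_iff, MonoidHom.map_closure, Set.image_pair, hX, hY]
    rw [← MonoidHom.range_eq_map, Subgroup.range_subtype]
    apply le_antisymm
    · rw [Subgroup.closure_le]
      rintro z (rfl | rfl)
      · exact X.2
      · exact Y.2
    · intro z hz
      have hz' : f.symm z ∈ alternatingGroup α := by
        rw [mem_alternatingGroup, ← hs, MulEquiv.apply_symm_apply]; exact hz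
      have h2 := h.gen hz'
      have h3 := Subgroup.mem_map_of_mem (f : Perm α →* Perm (Fin n)) h2
      rw [MonoidHom.map_closure, Set.image_pair] at h3
      simpa using h3
  · have aux : ∀ (z : Perm α) (Z : alternatingGroup (Fin n)), (Z : Perm (Fin n)) = f z →
        (∀ k : ℕ, z ^ k = 1 ∨ (z ^ k).support.card ∈ C) → ∀ (i : ℕ) (g : alternatingGroup (Fin n)),
        g * Z ^ i * g⁻¹ = 1 ∨ ((g * Z ^ i * g⁻¹ : alternatingGroup (Fin n)) :
          Perm (Fin n)).support.card ∈ C := by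
      intro z Z hZ hk i g
      rcases hk i with h1 | h1
      · left
        have : Z ^ i = 1 := by
          apply Subtype.ext
          rw [Subgroup.coe_pow, hZ, ← map_pow, h1, map_one]; rfl
        simp [this]
      · right
        rw [Subgroup.coe_mul, Subgroup.coe_mul, Subgroup.coe_inv, card_support_conj,
          Subgroup.coe_pow, hZ, ← map_pow, hf]
        exact h1
    rintro a ⟨i, g, rfl | rfl | rfl⟩
    · exact aux x X rfl h.px i g
    · exact aux y Y rfl h.py i g
    · exact aux (x * y) (X * Y) (by simp [X, Y]) h.pxy i g
  · intro h1
    apply hinj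
    rw [map_chiralWord, hX, hY, map_one]
    have := map_chiralWord (f : Perm α →* Perm (Fin n)) x y
    rw [h1, map_one] at this
    exact this.symm
  · intro h1 h2
    apply h1
    have h3 := congrArg (alternatingGroup (Fin n)).subtype h2
    rw [map_chiralWord, map_inv, map_inv, hX, hY, map_one] at h3
    have := map_chiralWord (f : Perm α →* Perm (Fin n)) x⁻¹ y⁻¹
    rw [map_inv, map_inv] at this
    apply f.injective
    rw [map_one]
    exact this.trans h3

end BeauvilleAux

namespace BeauvilleAux

open Equiv Equiv.Perm

theorem goodPair_of_comm {α : Type*} [Fintype α] [DecidableEq α] {C : Set ℕ} {x y t : Perm α}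
    (sx : sign x = 1) (hxt : x * y = t * x * t⁻¹)
    (gen : alternatingGroup α ≤ Subgroup.closure {x, y})
    (px : ∀ k : ℕ, x ^ k = 1 ∨ (x ^ k).support.card ∈ C)
    (py : ∀ k : ℕ, y ^ k = 1 ∨ (y ^ k).support.card ∈ C) : GoodPair C x y where
  sx := sx
  sy := by
    have := congrArg sign hxt
    simpa [sx] using this
  gen := gen
  px := px
  py := py
  pxy := by
    intro k
    rw [hxt, conj_pow, card_support_conj]
    rcases px k with h | h
    · left; simp [h]
    · right; exact h

theorem threeCycle_pow {α : Type*} [Fintype α] [DecidableEq α] {g : Perm α} (hg : g.IsThreeCycle)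
    (k : ℕ) : g ^ k = 1 ∨ (g ^ k).support.card = 3 := by
  have h3 : g ^ 3 = 1 := by rw [← hg.orderOf]; exact pow_orderOf_eq_one g
  rw [pow_eq_pow_mod k h3]
  have : k % 3 < 3 := Nat.mod_lt _ (by norm_num)
  interval_cases (k % 3)
  · left; simp
  · right; simpa using hg.card_support
  · right
    rw [pow_two]
    exact hg.isThreeCycle_sq.card_support

/-- Propagation along conjugates of a three-cycle. -/
theorem conj_step {α : Type*} [Fintype α] [DecidableEq α] {H : Subgroup (Perm α)} {x c : Perm α}
    (hx : x ∈ H) (hc : c ∈ H) (h3 : c.IsThreeCycle) {B : Set α}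
    (hB : ∀ g ∈ H, g.IsThreeCycle → ∀ a ∈ B, ∀ b, g a ≠ a → g b ≠ b → b ∈ B)
    (k : ℕ) (p q : α) (hp : c p ≠ p) (hq : c q ≠ q) (h : (x ^ k) p ∈ B) : (x ^ k) q ∈ B := by
  refine hB (x ^ k * c * (x ^ k)⁻¹) (H.mul_mem (H.mul_mem (H.pow_mem hx k) hc)
    (H.inv_mem (H.pow_mem hx k))) ?_ _ h _ ?_ ?_
  · rw [← card_support_eq_three_iff, card_support_conj]; exact h3.card_support
  · simpa using hp
  · simpa using hq

/-- Rotation. -/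
def rot (m : ℕ) : Perm (ZMod m) := Equiv.addRight 1

theorem rot_pow (m k : ℕ) (z : ZMod m) : (rot m ^ k) z = z + k := by
  induction k generalizing z with
  | zero => simp
  | succ k ih => rw [pow_succ, Perm.mul_apply, ih]; simp [rot]; ring

theorem rot_sign_odd {m : ℕ} [NeZero m] (hm : Odd m) : sign (rot m) = 1 := by
  have h1 : rot m ^ m = 1 := by ext z; simp [rot_pow]
  have h2 := congrArg sign h1
  rw [map_pow, map_one] at h2
  rcases Int.units_eq_one_or (sign (rot m)) with h | h
  · exact h
  · rw [h, hm.neg_one_pow] at h2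
    exact absurd h2 (by decide)

theorem rot_sign_even {m : ℕ} [NeZero m] (hm : Even m) : sign (rot m) = -1 := by
  obtain ⟨k, rfl⟩ : ∃ k, m = k + 1 := ⟨m - 1, by have := NeZero.pos m; omega⟩
  have : (rot (k + 1) : Perm (Fin (k + 1))) = finRotate (k + 1) :=
    Equiv.ext (fun z : Fin (k + 1) => (finRotate_apply z).symm)
  have h2 := sign_finRotate (k + 1)
  rw [← this] at h2
  rw [show (sign (rot (k+1)) : ℤˣ) = _ from h2]
  have : Odd k := by
    rcases Nat.even_or_odd k with h | h
    · exact absurd hm (by simpa [Nat.even_add_one] using h)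
    · exact h
  simpa using this.neg_one_pow

theorem rot_pow_eq {m : ℕ} {k : ℕ} {z : ZMod m} (h : (rot m ^ k) z = z) : (k : ZMod m) = 0 := by
  rw [rot_pow] at h; simpa using h

theorem zmod_all {m : ℕ} [NeZero m] {p : ZMod m → Prop} {z : ZMod m} (h : p z)
    (hs : ∀ z, p z → p (z + 1)) (w : ZMod m) : p w := by
  have : ∀ k : ℕ, p (z + k) := by
    intro k
    induction k with
    | zero => simpa using h
    | succ k ih => have := hs _ ih; push_cast; rwa [← add_assoc]
  have h2 := this (w - z).val
  simpa using h2

/-- Second pair, odd degree. -/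
theorem pair2_odd {n : ℕ} (hn : 7 ≤ n) (ho : Odd n) : ∃ (α : Type) (_ : Fintype α) (_ : DecidableEq α)
    (x y : Perm α), Fintype.card α = n ∧ GoodPair {3, n} x y := by
  have : NeZero n := ⟨by omega⟩
  have : Fact (1 < n) := ⟨by omega⟩
  have h12 : (1 : ZMod n) ≠ -1 := by
    intro h
    have : ((2 : ℕ) : ZMod n) = 0 := by push_cast; linear_combination h
    rw [ZMod.natCast_eq_zero_iff] at this
    exact absurd (Nat.le_of_dvd (by norm_num) this) (by omega)
  have hs : (swap (0 : ZMod n) (-1) * swap 0 1).IsThreeCycle :=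
    isThreeCycle_swap_mul_swap_same (by simp) (by simp) h12.symm
  refine ⟨ZMod n, inferInstance, inferInstance, rot n, swap 0 (-1) * swap 0 1, ZMod.card n, ?_⟩
  refine goodPair_of_comm (t := swap 0 1) (rot_sign_odd ho) ?_ ?_ ?_ ?_
  · have h1 : rot n * swap 0 (-1) = swap 0 1 * rot n := by
      rw [mul_swap_eq_swap_mul]
      simp [rot, swap_comm]
    rw [← mul_assoc, h1, swap_inv]
  · refine alt_le_of_connected _ hs (Subgroup.subset_closure (by simp)) ?_
    intro B hne hB
    have step := conj_step (Subgroup.subset_closure (by simp)) (Subgroup.subset_closure (by simp))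
      hs hB (x := rot n)
    obtain ⟨z, hz⟩ := hne
    ext w
    simp only [Set.mem_univ, iff_true]
    refine zmod_all (p := (· ∈ B)) hz ?_ w
    intro z hz
    have := step z.val 0 1
      (by simp [swap_apply_of_ne_of_ne, h12])
      (by simpa using h12.symm)
      (by simpa [rot_pow] using hz)
    simpa [rot_pow, add_comm] using this
  · intro k
    by_cases h : (k : ZMod n) = 0
    · left; ext z; simp [rot_pow, h]
    · right
      right
      have : (rot n ^ k).support = Finset.univ := by
        ext z
        simp only [mem_support, Finset.mem_univ, iff_true]
        intro h'; exact h (rot_pow_eq h')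
      rw [this, Finset.card_univ, ZMod.card]; rfl
  · intro k
    exact (threeCycle_pow hs k).imp_right Or.inl

theorem optionCongr_rot_pow (m k : ℕ) : (optionCongr (rot m) : Perm (Option (ZMod m))) ^ k
    = optionCongr (rot m ^ k) := by
  induction k with
  | zero => ext z; simp
  | succ k ih => 
    rw [pow_succ, ih, pow_succ]
    apply Equiv.ext
    intro z
    cases z <;> simp

/-- Second pair, even degree. -/
theorem pair2_even {n : ℕ} (hn : 7 ≤ n) (he : Even n) : ∃ (α : Type) (_ : Fintype α)
    (_ : DecidableEq α) (x y : Perm α), Fintype.card α = n ∧ GoodPair {3, n - 1} x y := by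
  obtain ⟨m, rfl⟩ : ∃ m, n = m + 1 := ⟨n - 1, by omega⟩
  have ho : Odd m := by
    rcases Nat.even_or_odd m with h | h
    · exact absurd he (by simpa [Nat.even_add_one] using h)
    · exact h
  have : NeZero m := ⟨by omega⟩
  have : Fact (1 < m) := ⟨by omega⟩
  have hs : (swap (none : Option (ZMod m)) (some (-1)) * swap none (some 0)).IsThreeCycle :=
    isThreeCycle_swap_mul_swap_same (by simp) (by simp) (by simp)
  refine ⟨Option (ZMod m), inferInstance, inferInstance, optionCongr (rot m),
    swap none (some (-1)) * swap none (some 0), by simp [ZMod.card], ?_⟩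
  refine goodPair_of_comm (t := swap none (some 0)) ?_ ?_ ?_ ?_ ?_
  · rw [Equiv.optionCongr_sign]; exact rot_sign_odd ho
  · have h1 : (optionCongr (rot m) : Perm (Option (ZMod m))) * swap none (some (-1)) =
        swap none (some 0) * optionCongr (rot m) := by
      rw [mul_swap_eq_swap_mul]
      simp [rot]
    rw [← mul_assoc, h1, swap_inv]
  · refine alt_le_of_connected _ hs (Subgroup.subset_closure (by simp)) ?_
    intro B hne hB
    have step := conj_step (Subgroup.subset_closure (by simp)) (Subgroup.subset_closure (by simp))
      hs hB (x := (optionCongr (rot m) : Perm (Option (ZMod m))))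
    have m1 : (swap (none : Option (ZMod m)) (some (-1)) * swap none (some 0) :
        Perm (Option (ZMod m))) none ≠ none := by
      simp [swap_apply_of_ne_of_ne]
    have m2 : (swap (none : Option (ZMod m)) (some (-1)) * swap none (some 0) :
        Perm (Option (ZMod m))) (some 0) ≠ some 0 := by
      simp
    have m3 : (swap (none : Option (ZMod m)) (some (-1)) * swap none (some 0) :
        Perm (Option (ZMod m))) (some (-1))
        ≠ some (-1) := by
      simp [swap_apply_of_ne_of_ne]
    obtain ⟨z, hz⟩ : ∃ z : ZMod m, some z ∈ B := by
      obtain ⟨z, hz⟩ := hne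
      cases z with
      | some z => exact ⟨z, hz⟩
      | none => exact ⟨0, by simpa using step 0 none (some 0) m1 m2 (by simpa using hz)⟩
    have hall : ∀ w : ZMod m, some w ∈ B := by
      refine zmod_all (p := fun w => some w ∈ B) hz ?_
      intro z hz
      have := step (z + 1).val (some (-1)) (some 0) m3 m2
        (by simpa [optionCongr_rot_pow, rot_pow] using hz)
      simpa [optionCongr_rot_pow, rot_pow] using this
    ext w
    simp only [Set.mem_univ, iff_true]
    cases w with
    | some w => exact hall w
    | none => simpa using step 0 (some 0) none m2 m1 (by simpa using hall 0)
  · intro k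
    rw [optionCongr_rot_pow]
    by_cases h : (k : ZMod m) = 0
    · left; ext z; cases z <;> simp [rot_pow, h]
    · right
      right
      have : Perm.support (optionCongr (rot m ^ k) : Perm (Option (ZMod m))) =
          Finset.univ.map Function.Embedding.some := by
        ext z
        cases z with
        | none => simp
        | some z =>
          simp only [mem_support, optionCongr_apply, Option.map_some, ne_eq, Option.some.injEq,
            Finset.mem_map, Finset.mem_univ, true_and, Function.Embedding.some_apply,
            exists_eq, iff_true]
          intro h'; exact h (rot_pow_eq h')
      rw [this, Finset.card_map, Finset.card_univ, ZMod.card]; simp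
  · intro k
    exact (threeCycle_pow hs k).imp_right Or.inl

end BeauvilleAux

namespace BeauvilleAux

open Equiv Equiv.Perm

theorem via_swap {α : Type*} [DecidableEq α] (e : Fin 7 ↪ α) (i j : Fin 7) :
    viaEmbeddingHom e (swap i j) = swap (e i) (e j) := by
  ext z
  rw [viaEmbeddingHom_apply]
  by_cases hz : z ∈ Set.range e
  · obtain ⟨k, rfl⟩ := hz
    rw [viaEmbedding_apply, e.injective.map_swap]
  · rw [viaEmbedding_apply_of_notMem _ _ _ hz, swap_apply_of_ne_of_ne]
    · rintro rfl; exact hz ⟨_, rfl⟩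
    · rintro rfl; exact hz ⟨_, rfl⟩

theorem via_card {α : Type*} [Fintype α] [DecidableEq α] (e : Fin 7 ↪ α) (g : Perm (Fin 7)) :
    (viaEmbeddingHom e g).support.card = g.support.card := by
  have : (viaEmbeddingHom e g).support = g.support.map e := by
    ext z
    rw [viaEmbeddingHom_apply]
    by_cases hz : z ∈ Set.range e
    · obtain ⟨k, rfl⟩ := hz
      simp [viaEmbedding_apply]
    · simp only [mem_support, viaEmbedding_apply_of_notMem _ _ _ hz, Finset.mem_map, ne_eq,
        not_true_eq_false, false_iff]
      rintro ⟨k, -, rfl⟩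
      exact hz ⟨_, rfl⟩
  rw [this, Finset.card_map]

theorem via_three {α : Type*} [Fintype α] [DecidableEq α] (e : Fin 7 ↪ α) {g : Perm (Fin 7)}
    (hg : g.support.card = 3) : (viaEmbeddingHom e g).IsThreeCycle := by
  rw [← card_support_eq_three_iff, via_card, hg]

theorem conj_three_swaps {α : Type*} [DecidableEq α] (x : Perm α) (a b c d f g : α) :
    x * (swap a b * swap c d * swap f g) =
      swap (x a) (x b) * swap (x c) (x d) * swap (x f) (x g) * x := by
  have h := fun u v => mul_swap_eq_swap_mul x u v
  calc x * (swap a b * swap c d * swap f g) = (x * swap a b) * swap c d * swap f g := by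
        simp only [mul_assoc]
    _ = swap (x a) (x b) * (x * swap c d) * swap f g := by rw [h]; simp only [mul_assoc]
    _ = swap (x a) (x b) * swap (x c) (x d) * (x * swap f g) := by
        rw [h c d]; simp only [mul_assoc]
    _ = _ := by rw [h f g]; simp only [mul_assoc]

/-- The seven special points. -/
def pt (m : ℕ) (i : Fin 7) : ZMod m ⊕ Bool :=
  if i.val < 5 then Sum.inl ((i.val : ZMod m) - 1) else Sum.inr (decide (i.val = 6))

theorem pt_inj {m : ℕ} (hm : 5 ≤ m) : Function.Injective (pt m) := by
  intro i j h
  unfold pt at h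
  split_ifs at h with h1 h2 h2
  · have h3 := sub_left_injective (Sum.inl.inj h)
    rw [ZMod.natCast_eq_natCast_iff', Nat.mod_eq_of_lt (by omega), Nat.mod_eq_of_lt (by omega)] at h3
    exact Fin.ext h3
  · have h3 := Sum.inr.inj h
    have h4 : (i.val = 6) ↔ (j.val = 6) := by simpa using h3
    apply Fin.ext
    omega

/-- The long permutation of the first pair. -/
def lng (m : ℕ) (b : Perm Bool) : Perm (ZMod m ⊕ Bool) := Perm.sumCongr (rot m) b

theorem lng_pow (m : ℕ) (b : Perm Bool) (k : ℕ) :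
    lng m b ^ k = Perm.sumCongr (rot m ^ k) (b ^ k) := by
  induction k with
  | zero => simp
  | succ k ih => rw [pow_succ, ih, lng, Perm.sumCongr_mul, pow_succ, pow_succ]

theorem pair1_core {m : ℕ} [NeZero m] (hm : 5 ≤ m) (b : Perm Bool) (t0 tm tp S T W1 W2 : Perm (Fin 7))
    (C : Set ℕ) (hS : S = tm * t0⁻¹) (hT : T = t0 * tp⁻¹)
    (sx : sign (lng m b) = 1)
    (hm0 : lng m b * viaEmbeddingHom ⟨pt m, pt_inj hm⟩ tm =
      viaEmbeddingHom ⟨pt m, pt_inj hm⟩ t0 * lng m b)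
    (hp0 : lng m b * viaEmbeddingHom ⟨pt m, pt_inj hm⟩ t0 =
      viaEmbeddingHom ⟨pt m, pt_inj hm⟩ tp * lng m b)
    (px : ∀ k : ℕ, lng m b ^ k = 1 ∨ (lng m b ^ k).support.card ∈ C)
    (pS : ∀ k : ℕ, S ^ k = 1 ∨ (S ^ k).support.card ∈ C)
    (hW1 : W1 ∈ Subgroup.closure {S, T}) (hW2 : W2 ∈ Subgroup.closure {S, T})
    (c1 : W1.support.card = 3) (c2 : W2.support.card = 3)
    (p q : Fin 7) (hp : p.val < 4) (hq : q.val = p.val + 1)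
    (h1p : W1 p ≠ p) (h1q : W1 q ≠ q) (h15 : W1 5 ≠ 5) (h2p : W2 p ≠ p) (h26 : W2 6 ≠ 6)
    (ch1 : (S * S * T) ^ 35 = 1) (ch2 : (T⁻¹ * T⁻¹ * S⁻¹) ^ 35 ≠ 1) :
    ∃ x y : Perm (ZMod m ⊕ Bool), GoodPair C x y ∧ chiralWord x y = 1 ∧
      chiralWord x⁻¹ y⁻¹ ≠ 1 := by
  set V := viaEmbeddingHom (⟨pt m, pt_inj hm⟩ : Fin 7 ↪ ZMod m ⊕ Bool) with hV
  set x := lng m b with hx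
  have hxt : x * V S = V t0 * x * (V t0)⁻¹ := by
    rw [hS, map_mul, ← mul_assoc, hm0, map_inv]
  have hVT : x * V S * x⁻¹ = V T := by
    rw [hxt, hT, map_mul, map_inv, mul_assoc, mul_assoc, mul_right_inj]
    rw [← mul_assoc, mul_inv_eq_iff_eq_mul, eq_inv_mul_iff_mul_eq, ← mul_assoc, ← hp0]
    group
  have hxc : x ∈ Subgroup.closure {x, V S} := Subgroup.subset_closure (by simp)
  have hSc : V S ∈ Subgroup.closure {x, V S} := Subgroup.subset_closure (by simp)
  have hTc : V T ∈ Subgroup.closure {x, V S} := by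
    rw [← hVT]
    exact Subgroup.mul_mem _ (Subgroup.mul_mem _ hxc hSc) (Subgroup.inv_mem _ hxc)
  have hVc : ∀ W ∈ Subgroup.closure {S, T}, V W ∈ Subgroup.closure {x, V S} := by
    intro W hW
    have h2 := Subgroup.mem_map_of_mem V hW
    rw [MonoidHom.map_closure, Set.image_pair] at h2
    refine (Subgroup.closure_le _).2 ?_ h2
    rintro z (rfl | rfl)
    · exact hSc
    · exact hTc
  have hmov : ∀ (W : Perm (Fin 7)) (i : Fin 7), W i ≠ i → V W (pt m i) ≠ pt m i := by
    intro W i h h'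
    apply h
    apply pt_inj hm
    have h3 := viaEmbedding_apply W (⟨pt m, pt_inj hm⟩ : Fin 7 ↪ ZMod m ⊕ Bool) i
    rw [← viaEmbeddingHom_apply, ← hV] at h3
    exact h3.symm.trans h'
  refine ⟨x, V S, goodPair_of_comm sx hxt ?_ px ?_, ?_, ?_⟩
  · refine alt_le_of_connected _ (via_three _ c1) (hVc W1 hW1) ?_
    intro B hne hB
    have step1 := conj_step hxc (hVc W1 hW1) (via_three _ c1) hB
    have step2 := conj_step hxc (hVc W2 hW2) (via_three _ c2) hB
    have hpp : pt m p = Sum.inl ((p.val : ZMod m) - 1) := by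
      rw [pt, if_pos (by omega)]
    have hqq : pt m q = Sum.inl ((p.val : ZMod m)) := by
      rw [pt, if_pos (by omega), hq]; push_cast; simp
    have hP : pt m 5 = Sum.inr false := rfl
    have hQ : pt m 6 = Sum.inr true := rfl
    obtain ⟨z, hz⟩ : ∃ z : ZMod m, Sum.inl z ∈ B := by
      obtain ⟨z, hz⟩ := hne
      rcases z with z | z
      · exact ⟨z, hz⟩
      · refine ⟨(p.val : ZMod m) - 1, ?_⟩
        rw [← hpp]
        cases z with
        | false =>
          rw [← hP] at hz
          simpa using step1 0 (pt m 5) (pt m p) (hmov _ _ h15) (hmov _ _ h1p) (by simpa using hz)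
        | true =>
          rw [← hQ] at hz
          simpa using step2 0 (pt m 6) (pt m p) (hmov _ _ h26) (hmov _ _ h2p) (by simpa using hz)
    have hall : ∀ w : ZMod m, Sum.inl w ∈ B := by
      refine zmod_all (p := fun w => Sum.inl w ∈ B) hz ?_
      intro z hz
      have := step1 (z - p.val + 1).val (pt m p) (pt m q) (hmov _ _ h1p) (hmov _ _ h1q)
        (by rw [hpp, hx, lng_pow]; simpa [rot_pow] using hz)
      rw [hqq, hx, lng_pow] at this
      have h4 : (p.val : ZMod m) + (z - p.val + 1) = z + 1 := by ring
      simpa [rot_pow, h4] using this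
    have hpB : pt m p ∈ B := by rw [hpp]; exact hall _
    ext w
    simp only [Set.mem_univ, iff_true]
    rcases w with w | w
    · exact hall w
    · cases w with
      | false =>
        rw [← hP]
        simpa using step1 0 (pt m p) (pt m 5) (hmov _ _ h1p) (hmov _ _ h15) (by simpa using hpB)
      | true =>
        rw [← hQ]
        simpa using step2 0 (pt m p) (pt m 6) (hmov _ _ h2p) (hmov _ _ h26) (by simpa using hpB)
  · intro k
    rw [← map_pow, hV, via_card]
    rcases pS k with h | h
    · left; rw [h, map_one]
    · right; exact h
  · rw [chiralWord, hVT, ← map_mul, ← map_mul, ← map_pow, ch1, map_one]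
  · intro h
    apply ch2
    apply viaEmbeddingHom_injective (⟨pt m, pt_inj hm⟩ : Fin 7 ↪ ZMod m ⊕ Bool)
    rw [← hV, map_one, map_pow, map_mul, map_mul, map_inv, map_inv, ← hVT]
    rw [chiralWord] at h
    have h5 : (x * V S * x⁻¹)⁻¹ * (x * V S * x⁻¹)⁻¹ * (V S)⁻¹ =
        x * ((V S)⁻¹ * (V S)⁻¹ * (x⁻¹ * (V S)⁻¹ * x⁻¹⁻¹)) * x⁻¹ := by group
    rw [h5, conj_pow, h]
    group

theorem lng_pt {m : ℕ} (b : Perm Bool) (i : ℕ) (hi : i < 4) :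
    lng m b (pt m ⟨i, by omega⟩) = pt m ⟨i + 1, by omega⟩ := by
  rw [pt, pt, if_pos (by simp; omega), if_pos (by simp; omega)]
  simp [lng, rot]

theorem pair1_odd {n : ℕ} (hn : 7 ≤ n) (ho : Odd n) : ∃ (α : Type) (_ : Fintype α) (_ : DecidableEq α)
    (x y : Perm α), Fintype.card α = n ∧ GoodPair {n - 2, 4, 6} x y ∧ chiralWord x y = 1 ∧
      chiralWord x⁻¹ y⁻¹ ≠ 1 := by
  obtain ⟨m, rfl⟩ : ∃ m, n = m + 2 := ⟨n - 2, by omega⟩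
  have hm : 5 ≤ m := by omega
  have hmo : Odd m := by
    rcases Nat.even_or_odd m with h | h
    · exact absurd (h.add (by decide : Even 2)) (by simpa using ho)
    · exact h
  have : NeZero m := ⟨by omega⟩
  have e0 := lng_pt (m := m) 1 0 (by norm_num)
  have e1 := lng_pt (m := m) 1 1 (by norm_num)
  have e2 := lng_pt (m := m) 1 2 (by norm_num)
  have e3 := lng_pt (m := m) 1 3 (by norm_num)
  have e5 : lng m 1 (pt m 5) = pt m 5 := rfl
  have e6 : lng m 1 (pt m 6) = pt m 6 := rfl
  simp only [zero_add, Nat.reduceAdd, Fin.reduceFinMk, Fin.zero_eta, Fin.mk_one] at e0 e1 e2 e3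
  refine ⟨ZMod m ⊕ Bool, inferInstance, inferInstance, ?_⟩
  let t0 : Perm (Fin 7) := swap 5 1 * swap 5 2 * swap 6 3
  let tm : Perm (Fin 7) := swap 5 0 * swap 5 1 * swap 6 2
  let tp : Perm (Fin 7) := swap 5 2 * swap 5 3 * swap 6 4
  let S := tm * t0⁻¹
  let T := t0 * tp⁻¹
  have hS : S ∈ Subgroup.closure {S, T} := Subgroup.subset_closure (by simp)
  have hT : T ∈ Subgroup.closure {S, T} := Subgroup.subset_closure (by simp)
  have hT' := Subgroup.inv_mem _ hT
  have hS4 : S ^ 4 = 1 := by decide +kernel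
  obtain ⟨x, y, h⟩ := pair1_core hm 1 t0 tm tp S T (S * S * T * T * S * T)
    (T * S * T * T * S * T * S * T⁻¹) {m, 4, 6} rfl rfl
    (by rw [lng, sign_sumCongr, rot_sign_odd hmo]; simp)
    (by simp only [t0, tm, map_mul, via_swap, Function.Embedding.coeFn_mk, conj_three_swaps,
          e0, e1, e2, e3, e5, e6])
    (by simp only [t0, tp, map_mul, via_swap, Function.Embedding.coeFn_mk, conj_three_swaps,
          e0, e1, e2, e3, e5, e6])
    (by
      intro k
      by_cases h : (k : ZMod m) = 0
      · left
        rw [lng_pow]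
        ext z
        cases z <;> simp [rot_pow, h]
      · right
        left
        have : (lng m 1 ^ k).support = Finset.univ.map Function.Embedding.inl := by
          ext z
          rw [lng_pow]
          rcases z with z | z
          · simp [rot_pow, h]
          · simp
        rw [this, Finset.card_map, Finset.card_univ, ZMod.card])
    (by
      intro k
      rw [pow_eq_pow_mod k hS4]
      have : k % 4 < 4 := Nat.mod_lt _ (by norm_num)
      interval_cases (k % 4)
      · left; simp
      · right; right; right; decide
      · right; right; left; decide
      · right; right; right; decide)
    (Subgroup.mul_mem _ (Subgroup.mul_mem _ (Subgroup.mul_mem _ (Subgroup.mul_mem _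
      (Subgroup.mul_mem _ hS hS) hT) hT) hS) hT)
    (Subgroup.mul_mem _ (Subgroup.mul_mem _ (Subgroup.mul_mem _ (Subgroup.mul_mem _
      (Subgroup.mul_mem _ (Subgroup.mul_mem _ (Subgroup.mul_mem _ hT hS) hT) hT) hS) hT) hS) hT')
    (by decide +kernel) (by decide +kernel) 0 1 (by decide +kernel) (by decide +kernel)
    (by decide +kernel) (by decide +kernel) (by decide +kernel) (by decide +kernel) (by decide +kernel)
    (by decide +kernel) (by decide +kernel)
  exact ⟨x, y, by simp [ZMod.card], h⟩

theorem pair1_even {n : ℕ} (hn : 7 ≤ n) (he : Even n) : ∃ (α : Type) (_ : Fintype α)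
    (_ : DecidableEq α) (x y : Perm α), Fintype.card α = n ∧ GoodPair {n - 2, n, 5} x y ∧
      chiralWord x y = 1 ∧ chiralWord x⁻¹ y⁻¹ ≠ 1 := by
  obtain ⟨m, rfl⟩ : ∃ m, n = m + 2 := ⟨n - 2, by omega⟩
  have hm : 5 ≤ m := by omega
  have hme : Even m := by
    rcases Nat.even_or_odd m with h | h
    · exact h
    · exact absurd (h.add_even (by decide : Even 2)) (by simpa using he)
  have : NeZero m := ⟨by omega⟩
  let b : Perm Bool := swap false true
  have e0 := lng_pt (m := m) b 0 (by norm_num)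
  have e1 := lng_pt (m := m) b 1 (by norm_num)
  have e2 := lng_pt (m := m) b 2 (by norm_num)
  have e3 := lng_pt (m := m) b 3 (by norm_num)
  have e5 : lng m b (pt m 5) = pt m 6 := rfl
  have e6 : lng m b (pt m 6) = pt m 5 := rfl
  simp only [zero_add, Nat.reduceAdd, Fin.reduceFinMk, Fin.zero_eta, Fin.mk_one] at e0 e1 e2 e3
  refine ⟨ZMod m ⊕ Bool, inferInstance, inferInstance, ?_⟩
  let t0 : Perm (Fin 7) := swap 5 1 * swap 5 2 * swap 6 3
  let tm : Perm (Fin 7) := swap 6 0 * swap 6 1 * swap 5 2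
  let tp : Perm (Fin 7) := swap 6 2 * swap 6 3 * swap 5 4
  let S := tm * t0⁻¹
  let T := t0 * tp⁻¹
  have hS : S ∈ Subgroup.closure {S, T} := Subgroup.subset_closure (by simp)
  have hT : T ∈ Subgroup.closure {S, T} := Subgroup.subset_closure (by simp)
  have hT' := Subgroup.inv_mem _ hT
  have hS5 : S ^ 5 = 1 := by decide +kernel
  have hb2 : b ^ 2 = 1 := by decide
  obtain ⟨x, y, h⟩ := pair1_core hm b t0 tm tp S T (T * S * T * T * S * T)
    (S * S * T * S * T⁻¹ * T⁻¹) {m, m + 2, 5} rfl rfl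
    (by rw [lng, sign_sumCongr, rot_sign_even hme, sign_swap (by decide)]; simp)
    (by simp only [t0, tm, map_mul, via_swap, Function.Embedding.coeFn_mk, conj_three_swaps,
          e0, e1, e2, e3, e5, e6])
    (by simp only [t0, tp, map_mul, via_swap, Function.Embedding.coeFn_mk, conj_three_swaps,
          e0, e1, e2, e3, e5, e6])
    (by
      intro k
      rcases Nat.even_or_odd k with hk | hk
      · have hbk : b ^ k = 1 := by
          obtain ⟨j, rfl⟩ := hk
          rw [← two_mul, pow_mul, hb2, one_pow]
        by_cases h : (k : ZMod m) = 0
        · left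
          rw [lng_pow, hbk]
          ext z
          cases z <;> simp [rot_pow, h]
        · right
          left
          have : (lng m b ^ k).support = Finset.univ.map Function.Embedding.inl := by
            ext z
            rw [lng_pow, hbk]
            rcases z with z | z
            · simp [rot_pow, h]
            · simp
          rw [this, Finset.card_map, Finset.card_univ, ZMod.card]
      · have hbk : b ^ k = b := by
          obtain ⟨j, rfl⟩ := hk
          rw [pow_succ, pow_mul, hb2, one_pow, one_mul]
        have h : (k : ZMod m) ≠ 0 := by
          intro h
          rw [ZMod.natCast_eq_zero_iff] at h
          have := (even_iff_two_dvd.1 hme).trans h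
          rw [← even_iff_two_dvd] at this
          exact Nat.not_even_iff_odd.2 hk this
        right
        right
        left
        have : (lng m b ^ k).support = Finset.univ := by
          ext z
          rw [lng_pow, hbk]
          rcases z with z | z
          · simp [rot_pow, h]
          · cases z <;> simp [b]
        rw [this, Finset.card_univ]
        simp [ZMod.card])
    (by
      intro k
      rw [pow_eq_pow_mod k hS5]
      have : k % 5 < 5 := Nat.mod_lt _ (by norm_num)
      interval_cases (k % 5)
      · left; simp
      all_goals right; right; right; decide)
    (Subgroup.mul_mem _ (Subgroup.mul_mem _ (Subgroup.mul_mem _ (Subgroup.mul_mem _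
      (Subgroup.mul_mem _ hT hS) hT) hT) hS) hT)
    (Subgroup.mul_mem _ (Subgroup.mul_mem _ (Subgroup.mul_mem _ (Subgroup.mul_mem _
      (Subgroup.mul_mem _ hS hS) hT) hS) hT') hT')
    (by decide +kernel) (by decide +kernel) 2 3 (by decide +kernel) (by decide +kernel)
    (by decide +kernel) (by decide +kernel) (by decide +kernel) (by decide +kernel) (by decide +kernel)
    (by decide +kernel) (by decide +kernel)
  exact ⟨x, y, by simp [ZMod.card], h⟩

end BeauvilleAux

open BeauvilleAux in
/-- For every `n ≥ 7`, the alternating group `A_n` admits a Beauville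
structure that is not strongly real. -/
theorem alternatingGroup_exists_non_strongly_real_beauville_structure
    (n : ℕ) (hn : 7 ≤ n) :
    ∃ x₁ y₁ x₂ y₂ : alternatingGroup (Fin n),
      IsBeauvilleStructure x₁ y₁ x₂ y₂ ∧ ¬ IsStronglyRealStructure x₁ y₁ x₂ y₂ := by
  obtain ⟨C, D, hCD, ⟨α, _, _, x, y, hα, hxy, hc1, hc2⟩, β, _, _, z, w, hβ, hzw⟩ :
      ∃ C D : Set ℕ, (∀ k ∈ C, k ∉ D) ∧
      (∃ (α : Type) (_ : Fintype α) (_ : DecidableEq α) (x y : Equiv.Perm α), Fintype.card α = n ∧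
        GoodPair C x y ∧ chiralWord x y = 1 ∧ chiralWord x⁻¹ y⁻¹ ≠ 1) ∧
      (∃ (α : Type) (_ : Fintype α) (_ : DecidableEq α) (x y : Equiv.Perm α), Fintype.card α = n ∧
        GoodPair D x y) := by
    rcases Nat.even_or_odd n with h | h
    · refine ⟨_, _, ?_, pair1_even hn h, pair2_even hn h⟩
      have : n ≠ 7 := by rintro rfl; revert h; decide
      simp only [Set.mem_insert_iff, Set.mem_singleton_iff]
      omega
    · refine ⟨_, _, ?_, pair1_odd hn h, pair2_odd hn h⟩
      simp only [Set.mem_insert_iff, Set.mem_singleton_iff]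
      omega
  obtain ⟨x₁, y₁, g1, s1, k1, k2⟩ := hxy.exists_fin hα
  obtain ⟨x₂, y₂, g2, s2, -, -⟩ := hzw.exists_fin hβ
  refine ⟨x₁, y₁, x₂, y₂, ⟨g1, g2, ?_⟩, ?_⟩
  · ext g
    constructor
    · rintro ⟨h1, h2⟩
      rcases s1 g h1 with h | h
      · exact h
      · rcases s2 g h2 with h' | h'
        · exact h'
        · exact absurd h' (hCD _ h)
    · rintro rfl
      exact ⟨⟨0, 1, Or.inl (by simp)⟩, ⟨0, 1, Or.inl (by simp)⟩⟩
  · rintro ⟨φ, g, -, hx, hy, -, -⟩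
    apply k2 hc2
    have h3 := map_chiralWord ((MulAut.conj g).toMonoidHom.comp φ.toMonoidHom) x₁ y₁
    rw [k1 hc1, map_one] at h3
    have hx' : ((MulAut.conj g).toMonoidHom.comp φ.toMonoidHom) x₁ = x₁⁻¹ := hx
    have hy' : ((MulAut.conj g).toMonoidHom.comp φ.toMonoidHom) y₁ = y₁⁻¹ := hy
    rw [hx', hy'] at h3
    exact h3.symm
end

section
/- Let n ≥ 7 be odd, and in the alternating group A_n on {1,…,n} let x₂ = (5,4,3,2,1) and y₂ = (3,4,5,6,…,n). Then x₂ and y₂ generate A_n, and their product x₂y₂ = (1,6,7,…,n,3,2) is an (n−2)-cycle. -/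
section Helpers
open Equiv

lemma yVal (n : ℕ) (hn : 7 ≤ n) (i : Fin n) :
    ((List.formPerm ((List.finRange n).drop 2)) i).val =
      if i.val < 2 then i.val else if i.val + 1 < n then i.val + 1 else 2 := by
  have hnd : ((List.finRange n).drop 2).Nodup := (List.nodup_finRange n).sublist (List.drop_sublist _ _)
  have hlen : ((List.finRange n).drop 2).length = n - 2 := by simp
  by_cases h : i.val < 2
  · rw [if_pos h, List.formPerm_apply_of_notMem]
    intro hm
    obtain ⟨k, hk, e⟩ := List.getElem_of_mem hm
    have := congrArg Fin.val e
    simp at this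
    omega
  · rw [if_neg h]
    have hk : i.val - 2 < ((List.finRange n).drop 2).length := by omega
    have e : i = ((List.finRange n).drop 2)[i.val - 2] := by
      ext; simp; omega
    have := List.formPerm_apply_getElem _ hnd (i.val - 2) hk
    rw [← e] at this
    rw [this]
    simp only [List.getElem_drop, List.getElem_finRange, hlen, Fin.val_cast]
    split_ifs with h2
    · rw [Nat.mod_eq_of_lt (by omega)]; omega
    · have : i.val - 2 + 1 = n - 2 := by omega
      rw [this, Nat.mod_self]

lemma litVal (n : ℕ) [NeZero n] (hn : 7 ≤ n) :
    (0 : Fin n).val = 0 ∧ (1 : Fin n).val = 1 ∧ (2 : Fin n).val = 2 ∧ (3 : Fin n).val = 3 ∧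
    (4 : Fin n).val = 4 ∧ (5 : Fin n).val = 5 ∧ (6 : Fin n).val = 6 := by
  refine ⟨rfl, ?_, ?_, ?_, ?_, ?_, ?_⟩ <;> (simp; try rw [Nat.mod_eq_of_lt] <;> omega)

lemma fiveVal {n : ℕ} (a b c d e i : Fin n)
    (h : [a, b, c, d, e].Nodup) :
    List.formPerm [a, b, c, d, e] i =
      if i = a then b else if i = b then c else if i = c then d else if i = d then e
      else if i = e then a else i := by
  simp only [List.formPerm_cons_cons, List.formPerm_singleton, mul_one, Perm.mul_apply,
    swap_apply_def]
  simp at h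
  grind

lemma conj_five {n : ℕ} (a b c d e : Fin n) (g : Perm (Fin n)) :
    g * List.formPerm [a, b, c, d, e] * g⁻¹ = List.formPerm [g a, g b, g c, g d, g e] := by
  simp only [List.formPerm_cons_cons, List.formPerm_singleton, mul_one]
  simp only [swap_apply_apply]
  group

lemma closure_big (n : ℕ) [NeZero n] (t : Perm (Fin n)) (u : Fin n)
    (ht : t = swap 0 u)
    (H : Subgroup (Perm (Fin n)))
    (h : ∀ i : Fin n, i ≠ 0 → t * swap 0 i ∈ H) :
    alternatingGroup (Fin n) ≤ H := by
  have tt : t * t = 1 := by rw [ht]; simp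
  have tinv : t⁻¹ = t := by rw [ht]; simp
  have hst : ∀ s : Perm (Fin n), s⁻¹ = s → t * s ∈ H → s * t ∈ H := by
    intro s hs hh
    have := H.inv_mem hh
    rwa [mul_inv_rev, hs, tinv] at this
  have key : ∀ a b : Fin n, a ≠ b → t * swap a b ∈ H := by
    intro a b hab
    by_cases ha : a = 0
    · subst ha; exact h b hab.symm
    by_cases hb : b = 0
    · subst hb; rw [swap_comm]; exact h a hab
    have e : swap a b = swap 0 a * swap 0 b * swap 0 a := by
      have := swap_apply_apply (swap 0 a) 0 b
      rw [swap_apply_left, swap_apply_of_ne_of_ne hb hab.symm] at this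
      rw [this]; simp
    have : t * swap a b = (t * swap 0 a) * (swap 0 b * t) * (t * swap 0 a) := by
      rw [e]
      calc _ = t * swap 0 a * swap 0 b * 1 * swap 0 a := by group
        _ = _ := by rw [← tt]; group
    rw [this]
    exact H.mul_mem (H.mul_mem (h a ha) (hst _ (by simp) (h b hb))) (h a ha)
  have main : ∀ σ : Perm (Fin n), (Perm.sign σ = 1 → σ ∈ H) ∧ (Perm.sign σ = -1 → t * σ ∈ H) := by
    intro σ
    induction σ using Perm.swap_induction_on with
    | one => exact ⟨fun _ => H.one_mem, fun h => by simp at h⟩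
    | swap_mul f x y hxy ih =>
      rw [Perm.sign_mul, Perm.sign_swap hxy]
      constructor
      · intro hs
        have h1 := ih.2 (by simpa using congrArg (fun z => -z) hs)
        have e : swap x y * f = (swap x y * t) * (t * f) := by
          calc _ = swap x y * 1 * f := by group
            _ = _ := by rw [← tt]; group
        rw [e]
        exact H.mul_mem (hst _ (by simp) (key x y hxy)) h1
      · intro hs
        have h1 := ih.1 (by simpa using hs)
        rw [← mul_assoc]
        exact H.mul_mem (key x y hxy) h1
  intro σ hσ
  exact (main σ).1 (Perm.mem_alternatingGroup.1 hσ)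

lemma zlist (n : ℕ) [NeZero n] (hn : 7 ≤ n) (k : ℕ)
    (hk : k < ((0 : Fin n) :: ((List.finRange n).drop 5 ++ [2, 1])).length) :
    (((0 : Fin n) :: ((List.finRange n).drop 5 ++ [2, 1]))[k]).val =
      if k = 0 then 0 else if k ≤ n - 5 then k + 4 else if k = n - 4 then 2 else 1 := by
  obtain ⟨l0, l1, l2, l3, l4, l5, l6⟩ := litVal n hn
  simp at hk
  rcases k with _ | k
  · simp
  · simp only [List.getElem_cons_succ, List.getElem_append, if_neg (Nat.succ_ne_zero k)]
    split_ifs with h1 h2 h3 h4 h5 h6 h7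
    all_goals simp at h1
    all_goals try omega
    · simp only [List.getElem_drop, List.getElem_finRange, Fin.val_cast]; omega
    · have : k - (n - 5) = 0 := by omega
      simp only [List.length_drop, List.length_finRange, this, List.getElem_cons_zero, l2]
    · have : k - (n - 5) = 1 := by omega
      simp only [List.length_drop, List.length_finRange, this, List.getElem_cons_succ,
        List.getElem_cons_zero, l1]

lemma zstep (n : ℕ) (hn : 7 ≤ n) (k m : ℕ) (hk : k < n - 2)
    (hv : (if k = 0 then 0 else if k ≤ n - 5 then k + 4 else if k = n - 4 then 2 else 1) = m) :
    (if (if m = 0 then 4 else if m ≤ 4 then m - 1 else m) < 2 then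
        (if m = 0 then 4 else if m ≤ 4 then m - 1 else m)
      else if (if m = 0 then 4 else if m ≤ 4 then m - 1 else m) + 1 < n then
        (if m = 0 then 4 else if m ≤ 4 then m - 1 else m) + 1 else 2) =
      if (if k + 1 = n - 2 then 0 else k + 1) = 0 then 0
      else if (if k + 1 = n - 2 then 0 else k + 1) ≤ n - 5 then
        (if k + 1 = n - 2 then 0 else k + 1) + 4
      else if (if k + 1 = n - 2 then 0 else k + 1) = n - 4 then 2 else 1 := by
  generalize hp : (if m = 0 then 4 else if m ≤ 4 then m - 1 else m) = p
  generalize hq : (if k + 1 = n - 2 then 0 else k + 1) = q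
  grind (splits := 25)

end Helpers

set_option maxHeartbeats 4000000 in
/-- for odd `n ≥ 7`, in `A_n` the elements `x₂ = (5,4,3,2,1)` and
`y₂ = (3,4,5,…,n)` generate `A_n`, and their product `x₂y₂ = (1,6,7,…,n,3,2)`
is an `(n−2)`-cycle.  Points `1,…,n` are modelled by `Fin n` (zero-based), cycles by
`List.formPerm`, and since Mathlib's permutation product applies the right-hand
factor first, the paper's product `x₂y₂` (apply `x₂` first) is `y₂ * x₂`. -/
theorem alternatingGroup_odd_second_pair
    (n : ℕ) [NeZero n] (hn : 7 ≤ n) (hodd : Odd n)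
    (x₂ y₂ : Equiv.Perm (Fin n))
    (hx₂ : x₂ = List.formPerm [(4 : Fin n), 3, 2, 1, 0])
    (hy₂ : y₂ = List.formPerm ((List.finRange n).drop 2)) :
    Subgroup.closure {x₂, y₂} = alternatingGroup (Fin n) ∧
    y₂ * x₂ = List.formPerm ((0 : Fin n) :: ((List.finRange n).drop 5 ++ [2, 1])) ∧
    (y₂ * x₂).IsCycle ∧ (y₂ * x₂).support.card = n - 2 := by
  obtain ⟨l0, l1, l2, l3, l4, l5, l6⟩ := litVal n hn
  have yv : ∀ i, (y₂ i).val = if i.val < 2 then i.val else if i.val + 1 < n then i.val + 1 else 2 :=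
    fun i => by rw [hy₂]; exact yVal n hn i
  have nd : [(4 : Fin n), 3, 2, 1, 0].Nodup := by
    simp only [List.nodup_cons, List.mem_cons, Fin.ext_iff, l0, l1, l2, l3, l4]; simp
  have xv : ∀ i, (x₂ i).val = if i.val = 0 then 4 else if i.val ≤ 4 then i.val - 1 else i.val := by
    intro i
    rw [hx₂, fiveVal _ _ _ _ _ _ nd]
    simp only [Fin.ext_iff, l1, l2, l3, l4, l0]
    split_ifs <;> omega
  set L := (0 : Fin n) :: ((List.finRange n).drop 5 ++ [2, 1]) with hL
  have Llen : L.length = n - 2 := by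
    simp only [hL, List.length_cons, List.length_append, List.length_drop, List.length_finRange,
      List.length_nil]; omega
  have Lv := zlist n hn
  rw [← hL] at Lv
  have Lnd : L.Nodup := by
    rw [List.nodup_iff_injective_getElem]
    rintro ⟨i, hi⟩ ⟨j, hj⟩ h
    have := congrArg Fin.val h
    simp only [Lv] at this
    ext
    simp only
    split_ifs at this <;> omega
  have hz : y₂ * x₂ = List.formPerm L := by
    ext i
    rw [Equiv.Perm.mul_apply, yv, xv]
    by_cases h : i.val = 3 ∨ i.val = 4
    · rw [List.formPerm_apply_of_notMem]
      · split_ifs <;> omega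
      · intro hm
        obtain ⟨k, hk, e⟩ := List.getElem_of_mem hm
        have := congrArg Fin.val e
        rw [Lv] at this
        split_ifs at this <;> omega
    · obtain ⟨k, hk, hki⟩ : ∃ k, ∃ hk : k < L.length, L[k] = i := by
        refine ⟨if i.val = 0 then 0 else if i.val = 1 then n - 3 else if i.val = 2 then n - 4
          else i.val - 4, ?_, ?_⟩
        · split_ifs <;> omega
        · ext; rw [Lv]; split_ifs <;> omega
      have e := List.formPerm_apply_getElem _ Lnd k hk
      have hv := congrArg Fin.val hki
      rw [hki] at e
      rw [e, Lv]
      rw [Lv] at hv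
      have hm : (k + 1) % L.length = if k + 1 = n - 2 then 0 else k + 1 := by
        split_ifs with hh
        · rw [hh, Llen, Nat.mod_self]
        · exact Nat.mod_eq_of_lt (by omega)
      rw [hm]
      exact zstep n hn k i.val (by omega) hv
  have Lne : ∀ x : Fin n, L ≠ [x] := by
    intro x h
    have := congrArg List.length h
    simp [Llen] at this
    omega
  have zc : (List.formPerm L).IsCycle := List.isCycle_formPerm Lnd (by omega)
  have zs : (List.formPerm L).support.card = n - 2 := by
    rw [List.support_formPerm_of_nodup _ Lnd Lne, List.toFinset_card_of_nodup Lnd, Llen]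
  have ynd : ((List.finRange n).drop 2).Nodup :=
    (List.nodup_finRange n).sublist (List.drop_sublist _ _)
  have ylen : ((List.finRange n).drop 2).length = n - 2 := by simp
  have oddsign : ∀ l : List (Fin n), l.Nodup → 2 ≤ l.length → Odd l.length →
      l.formPerm ∈ alternatingGroup (Fin n) := by
    intro l h1 h2 h3
    rw [Equiv.Perm.mem_alternatingGroup, (List.isCycle_formPerm h1 h2).sign,
      List.support_formPerm_of_nodup _ h1 (by rintro x rfl; simp at h2),
      List.toFinset_card_of_nodup h1, h3.neg_one_pow, neg_neg]
  refine ⟨le_antisymm ?_ ?_, hz, hz ▸ zc, hz ▸ zs⟩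
  · rw [Subgroup.closure_le]
    rintro g (rfl | rfl)
    · rw [hx₂]; exact oddsign _ nd (by simp) (by simp; decide)
    · rw [hy₂]
      exact oddsign _ ynd (by omega) (by rw [ylen]; exact Nat.Odd.sub_even (by omega) hodd (by decide))
  · set H := Subgroup.closure {x₂, y₂} with hH
    have xm : x₂ ∈ H := Subgroup.subset_closure (by simp)
    have ym : y₂ ∈ H := Subgroup.subset_closure (by simp)
    have y0 : y₂ 0 = 0 := by ext; rw [yv]; simp
    have y1 : y₂ 1 = 1 := by ext; rw [yv, l1]; rfl
    have y2 : y₂ 2 = 3 := by ext; rw [yv, l2, l3]; split_ifs <;> omega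
    have y3 : y₂ 3 = 4 := by ext; rw [yv, l3, l4]; split_ifs <;> omega
    have y4 : y₂ 4 = 5 := by ext; rw [yv, l4, l5]; split_ifs <;> omega
    have y5 : y₂ 5 = 6 := by ext; rw [yv, l5, l6]; split_ifs <;> omega
    have hb := conj_five (4 : Fin n) 3 2 1 0 y₂
    have hc := conj_five (5 : Fin n) 4 3 1 0 y₂
    rw [y0, y1, y2, y3, y4] at hb
    rw [y0, y1, y3, y4, y5] at hc
    rw [← hx₂] at hb
    set b := List.formPerm [(5 : Fin n), 4, 3, 1, 0] with hbd
    set c := List.formPerm [(6 : Fin n), 5, 4, 1, 0] with hcd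
    have bm : b ∈ H := hb ▸ H.mul_mem (H.mul_mem ym xm) (H.inv_mem ym)
    have cm : c ∈ H := hc ▸ H.mul_mem (H.mul_mem ym bm) (H.inv_mem ym)
    have bv : ∀ i, (b i).val = if i.val = 0 then 5 else if i.val = 1 then 0 else
        if i.val = 3 then 1 else if i.val = 4 then 3 else if i.val = 5 then 4 else i.val := by
      intro i
      rw [hbd, fiveVal _ _ _ _ _ _ (by
        simp only [List.nodup_cons, List.mem_cons, Fin.ext_iff, l0, l1, l2, l3, l4, l5]; simp)]
      simp only [Fin.ext_iff, l1, l3, l4, l0, l5]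
      split_ifs <;> omega
    have cv : ∀ i, (c i).val = if i.val = 0 then 6 else if i.val = 1 then 0 else
        if i.val = 4 then 1 else if i.val = 5 then 4 else if i.val = 6 then 5 else i.val := by
      intro i
      rw [hcd, fiveVal _ _ _ _ _ _ (by
        simp only [List.nodup_cons, List.mem_cons, Fin.ext_iff, l0, l1, l2, l6, l4, l5]; simp)]
      simp only [Fin.ext_iff, l1, l6, l4, l0, l5]
      split_ifs <;> omega
    have tv : ∀ i : Fin n, ((Equiv.swap (0 : Fin n) 1 * Equiv.swap 0 2 : Equiv.Perm (Fin n)) i).val =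
        if i.val = 0 then 2 else if i.val = 1 then 0 else if i.val = 2 then 1 else i.val := by
      intro i
      simp only [Equiv.Perm.mul_apply, Equiv.swap_apply_def, Fin.ext_iff, apply_ite Fin.val,
        l0, l1, l2]
      clear * -
      generalize i.val = m
      grind (splits := 25)
    have hT : c * (Equiv.swap (0 : Fin n) 1 * Equiv.swap 0 2) = x₂ * x₂ * c * b := by
      ext i
      rw [Equiv.Perm.mul_apply, cv, tv]
      simp only [Equiv.Perm.mul_apply, xv, cv, bv]
      by_cases h : i.val < 7
      · generalize i.val = m at h
        interval_cases m <;> simp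
      · grind
    have Tm : Equiv.swap (0 : Fin n) 1 * Equiv.swap 0 2 ∈ H := by
      rw [← H.mul_mem_cancel_left cm, hT]
      exact H.mul_mem (H.mul_mem (H.mul_mem xm xm) cm) bm
    have all : ∀ k : ℕ, ∀ hk : k + 2 < n,
        Equiv.swap (0 : Fin n) 1 * Equiv.swap 0 ⟨k + 2, hk⟩ ∈ H := by
      intro k
      induction k with
      | zero =>
        intro hk
        have : (⟨0 + 2, hk⟩ : Fin n) = 2 := by ext; exact l2.symm
        rw [this]; exact Tm
      | succ k ih =>
        intro hk
        have h1 := ih (by omega)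
        have h2 := H.mul_mem (H.mul_mem ym h1) (H.inv_mem ym)
        have e1 := Equiv.swap_apply_apply y₂ 0 1
        have e2 := Equiv.swap_apply_apply y₂ 0 ⟨k + 2, by omega⟩
        have e3 : y₂ ⟨k + 2, by omega⟩ = ⟨k + 1 + 2, hk⟩ := by
          ext; rw [yv]; simp; omega
        rw [y0, y1] at e1
        rw [y0, e3] at e2
        have : Equiv.swap (0 : Fin n) 1 * Equiv.swap 0 ⟨k + 1 + 2, hk⟩ =
            y₂ * (Equiv.swap (0 : Fin n) 1 * Equiv.swap 0 ⟨k + 2, by omega⟩) * y₂⁻¹ := by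
          rw [e2]
          conv_lhs => rw [e1]
          group
        rw [this]; exact h2
    refine closure_big n _ 1 rfl H ?_
    intro i hi
    have hi0 : i.val ≠ 0 := fun h => hi (Fin.ext h)
    by_cases h1 : i.val = 1
    · have : i = 1 := by ext; rw [h1, l1]
      rw [this]; simp [H.one_mem]
    · have := all (i.val - 2) (by omega)
      have e : (⟨i.val - 2 + 2, by omega⟩ : Fin n) = i := by ext; simp; omega
      rwa [e] at this
end

section
/- Let n ≥ 7 be odd, and in the alternating group A_n on {1,…,n} let x₁ = (1,2,4), y₁ = (1,2,3,4,…,n), x₂ = (5,4,3,2,1) and y₂ = (3,4,5,6,…,n). Then {(x₁,y₁),(x₂,y₂)} is a Beauville structure for A_n. -/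
/-- `beauvilleSigmaIn K x y` is Σ(x,y) computed inside the subgroup `K`: the set of all
`K`-conjugates of all powers of `x`, `y` and `x*y`. -/
def beauvilleSigmaIn {G : Type*} [Group G] (K : Subgroup G) (x y : G) : Set G :=
  {a | ∃ (i : ℕ), ∃ g ∈ K,
      a = g * x ^ i * g⁻¹ ∨ a = g * y ^ i * g⁻¹ ∨ a = g * (x * y) ^ i * g⁻¹}

/-- `{(x₁,y₁),(x₂,y₂)}` is a Beauville structure for the subgroup `K`:
both pairs generate `K` and `Σ(x₁,y₁) ∩ Σ(x₂,y₂) = {1}` (computed within `K`). -/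
def IsBeauvilleStructureFor {G : Type*} [Group G] (K : Subgroup G) (x₁ y₁ x₂ y₂ : G) : Prop :=
  Subgroup.closure {x₁, y₁} = K ∧ Subgroup.closure {x₂, y₂} = K ∧
    beauvilleSigmaIn K x₁ y₁ ∩ beauvilleSigmaIn K x₂ y₂ = {1}

open Equiv Equiv.Perm
open scoped Pointwise

set_option maxHeartbeats 4000000

/-- A nontrivial block of a group containing a three-cycle is preserved by that three-cycle. -/
lemma threeCycle_mem_block {α : Type*} [Fintype α] [DecidableEq α] (H : Subgroup (Perm α))
    {τ : Perm α} (hτ : τ ∈ H) (h3 : IsThreeCycle τ) {B : Set α}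
    (hB : MulAction.IsBlock H B) (hn : B.Nontrivial) {c : α} (hc : c ∈ B) : τ c ∈ B := by
  have key : ∀ b ∈ B, τ b ∈ B → τ c ∈ B := by
    intro b hb hb'
    have h : (⟨τ, hτ⟩ : H) • B = B := hB.smul_eq_of_mem (a := b) hb hb'
    rw [← h]
    exact ⟨c, hc, rfl⟩
  obtain ⟨b, hb, hbc⟩ := hn.exists_ne c
  by_contra hcon
  have h1 : τ b ∉ B := fun h => hcon (key b hb h)
  have hbb : τ b ≠ b := fun h => h1 (by rw [h]; exact hb)
  have hcc : τ c ≠ c := fun h => hcon (by rw [h]; exact hc)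
  have h2 : τ b ≠ c := fun h => h1 (h ▸ hc)
  have h4 : τ c ≠ b := fun h => hcon (h ▸ hb)
  have h5 : τ b ≠ τ c := fun h => hbc (τ.injective h)
  have hsub : ({τ b, τ c, b, c} : Finset α) ⊆ τ.support := by
    intro z hz
    simp only [Finset.mem_insert, Finset.mem_singleton] at hz
    rcases hz with rfl | rfl | rfl | rfl <;> simp [hbb, hcc]
  have := Finset.card_le_card hsub
  rw [h3.card_support, Finset.card_eq_of_equiv_fin (n := 4)] at this
  · omega
  · refine Finset.equivFinOfCardEq ?_
    rw [Finset.card_insert_of_notMem, Finset.card_insert_of_notMem,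
      Finset.card_insert_of_notMem] <;> simp [*]

/-- If the conjugates in `H` of a three-cycle of `H` connect all points, `H` contains `A_n`. -/
lemma alternating_le_of_connected {α : Type*} [Fintype α] [DecidableEq α] (H : Subgroup (Perm α))
    {τ : Perm α} (hτ : τ ∈ H) (h3 : IsThreeCycle τ)
    (hconn : ∀ r : α → α → Prop, Equivalence r → (∀ h ∈ H, ∀ a b, r a b → r (h a) (h b)) →
      (∀ a, r a (τ a)) → ∀ a b, r a b) : alternatingGroup α ≤ H := by
  have htrans : MulAction.IsPretransitive H α := by
    refine ⟨fun a b => ?_⟩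
    have := hconn (fun a b => ∃ h ∈ H, h a = b) ⟨fun a => ⟨1, H.one_mem, rfl⟩, ?_, ?_⟩ ?_ ?_ a b
    · obtain ⟨h, hh, e⟩ := this
      exact ⟨⟨h, hh⟩, e⟩
    · rintro a b ⟨h, hh, rfl⟩
      exact ⟨h⁻¹, H.inv_mem hh, by simp⟩
    · rintro a b c ⟨h, hh, rfl⟩ ⟨g, hg, rfl⟩
      exact ⟨g * h, H.mul_mem hg hh, rfl⟩
    · rintro k hk a b ⟨h, hh, rfl⟩
      exact ⟨k * h * k⁻¹, H.mul_mem (H.mul_mem hk hh) (H.inv_mem hk), by simp⟩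
    · exact fun a => ⟨τ, hτ, rfl⟩
  have hprim : MulAction.IsPreprimitive H α := by
    refine { htrans with isTrivialBlock_of_isBlock := ?_ }
    intro B hB
    by_cases hn : B.Subsingleton
    · exact Or.inl hn
    · rw [Set.not_subsingleton_iff] at hn
      right
      have := hconn (fun a b => ∀ g ∈ H, (g a ∈ B ↔ g b ∈ B))
        ⟨fun _ _ _ => Iff.rfl, fun h g hg => (h g hg).symm,
          fun h h' g hg => (h g hg).trans (h' g hg)⟩
        (fun h hh a b hab g hg => hab (g * h) (H.mul_mem hg hh)) ?_
      · obtain ⟨b, hb⟩ := hn.nonempty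
        ext a
        simpa [hb] using this a b 1 H.one_mem
      · intro a g hg
        have hm : g * τ * g⁻¹ ∈ H := H.mul_mem (H.mul_mem hg hτ) (H.inv_mem hg)
        have hc : IsThreeCycle (g * τ * g⁻¹) := by
          rw [← card_support_eq_three_iff, card_support_conj, h3.card_support]
        constructor
        · intro h
          simpa using threeCycle_mem_block H hm hc hB hn h
        · intro h
          simpa using threeCycle_mem_block H (H.inv_mem hm) hc.inv hB hn h
  exact alternatingGroup_le_of_isPreprimitive_of_isThreeCycle_mem hprim h3 hτ

/-- Nontrivial conjugates of powers of a cycle move as many points as the cycle. -/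
lemma conj_pow_cycle {α : Type*} [Fintype α] [DecidableEq α] {f : Perm α} (hf : IsCycle f)
    (g : Perm α) (i : ℕ) (h : g * f ^ i * g⁻¹ ≠ 1) :
    (g * f ^ i * g⁻¹).support.card = f.support.card := by
  rw [card_support_conj, hf.support_pow_eq_iff.2]
  intro hd
  rw [orderOf_dvd_iff_pow_eq_one] at hd
  simp [hd] at h

lemma cycle_mem_alternating {α : Type*} [Fintype α] [DecidableEq α] {f : Perm α} (hf : IsCycle f)
    (h : Odd f.support.card) : f ∈ alternatingGroup α := by
  rw [mem_alternatingGroup, hf.sign, h.neg_one_pow]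
  simp

lemma card_support_formPerm {α : Type*} [Fintype α] [DecidableEq α] (l : List α) (h : l.Nodup)
    (h2 : 2 ≤ l.length) : (l.formPerm).support.card = l.length := by
  rw [List.support_formPerm_of_nodup l h, List.toFinset_card_of_nodup h]
  rintro x rfl
  simp at h2

lemma val_lit {n : ℕ} [NeZero n] (hn : 7 ≤ n) :
    (0 : Fin n) = ⟨0, by omega⟩ ∧ (1 : Fin n) = ⟨1, by omega⟩ ∧ (2 : Fin n) = ⟨2, by omega⟩ ∧
    (3 : Fin n) = ⟨3, by omega⟩ ∧ (4 : Fin n) = ⟨4, by omega⟩ := by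
  refine ⟨?_, ?_, ?_, ?_, ?_⟩ <;> apply Fin.ext
  · rfl
  · change 1 % n = 1; exact Nat.mod_eq_of_lt (show 1 < n by omega)
  · change 2 % n = 2; exact Nat.mod_eq_of_lt (show 2 < n by omega)
  · change 3 % n = 3; exact Nat.mod_eq_of_lt (show 3 < n by omega)
  · change 4 % n = 4; exact Nat.mod_eq_of_lt (show 4 < n by omega)

lemma val_y₁ {n : ℕ} (a : Fin n) :
    ((List.finRange n).formPerm a : ℕ) = if a.val + 1 = n then 0 else a.val + 1 := by
  have h := List.formPerm_apply_getElem (List.finRange n) (List.nodup_finRange n) a.val (by simp)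
  simp only [List.getElem_finRange, List.length_finRange] at h
  have h' := congrArg Fin.val h
  simp only [Fin.cast_mk, Fin.eta] at h'
  rw [h']
  have := a.2
  split_ifs with hh
  · simp [hh]
  · exact Nat.mod_eq_of_lt (by omega)

lemma val_y₂ {n : ℕ} (hn : 7 ≤ n) (a : Fin n) :
    (((List.finRange n).drop 2).formPerm a : ℕ) =
      if a.val < 2 then a.val else if a.val + 1 = n then 2 else a.val + 1 := by
  have ha := a.2
  have hnd : ((List.finRange n).drop 2).Nodup := (List.nodup_finRange n).sublist (List.drop_sublist _ _)
  split_ifs with h0 hh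
  · rw [List.formPerm_apply_of_notMem]
    intro hmem
    obtain ⟨k, hk, e⟩ := List.getElem_of_mem hmem
    simp at e
    have := congrArg Fin.val e
    simp at this
    omega
  all_goals
    have h := List.formPerm_apply_getElem _ hnd (a.val - 2) (by simp; omega)
    simp only [List.getElem_drop, List.getElem_finRange, List.length_drop, List.length_finRange] at h
    have h' := congrArg Fin.val h
    simp only [Fin.cast_mk, Fin.eta, show 2 + (a.val - 2) = a.val by omega] at h'
    rw [h']
  · rw [show a.val - 2 + 1 = n - 2 by omega, Nat.mod_self]
  · rw [Nat.mod_eq_of_lt (by omega)]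
    omega

lemma val_x₁ {n : ℕ} [NeZero n] (hn : 7 ≤ n) (a : Fin n) :
    (List.formPerm [(0 : Fin n), 1, 3] a : ℕ) =
      if a.val = 0 then 1 else if a.val = 1 then 3 else if a.val = 3 then 0 else a.val := by
  obtain ⟨h0, h1, h2, h3, h4⟩ := val_lit hn
  rw [h0, h1, h3]
  obtain ⟨a, ha⟩ := a
  simp only [List.formPerm_cons_cons, List.formPerm_singleton, mul_one, Perm.mul_apply,
    swap_apply_def, Fin.ext_iff]
  grind

lemma val_x₂ {n : ℕ} [NeZero n] (hn : 7 ≤ n) (a : Fin n) :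
    (List.formPerm [(4 : Fin n), 3, 2, 1, 0] a : ℕ) =
      if a.val = 0 then 4 else if a.val < 5 then a.val - 1 else a.val := by
  obtain ⟨h0, h1, h2, h3, h4⟩ := val_lit hn
  rw [h0, h1, h2, h3, h4]
  obtain ⟨a, ha⟩ := a
  simp only [List.formPerm_cons_cons, List.formPerm_singleton, mul_one, Perm.mul_apply,
    swap_apply_def, Fin.ext_iff]
  grind

/-- An equivalence relation containing all steps `k ~ k+1` is total on `Fin n`. -/
lemma rel_total {n : ℕ} (r : Fin n → Fin n → Prop) (hr : Equivalence r)
    (h : ∀ a b : Fin n, b.val = a.val + 1 → r a b) (a b : Fin n) : r a b := by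
  have key : ∀ (k : ℕ) (hk : k < n), r ⟨0, by omega⟩ ⟨k, hk⟩ := by
    intro k
    induction k with
    | zero => exact fun _ => hr.refl _
    | succ k ih => exact fun hk => hr.trans (ih (by omega)) (h _ _ rfl)
  exact hr.trans (hr.symm (key a a.2)) (key b b.2)

/-- for odd `n ≥ 7`, the pairs `x₁ = (1,2,4)`, `y₁ = (1,2,3,…,n)` and
`x₂ = (5,4,3,2,1)`, `y₂ = (3,4,5,…,n)` form a Beauville structure for `A_n`.
Points `1,…,n` are modelled by `Fin n` (zero-based) and cycles by `List.formPerm`. -/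
theorem alternatingGroup_odd_beauville_structure
    (n : ℕ) [NeZero n] (hn : 7 ≤ n) (hodd : Odd n)
    (x₁ y₁ x₂ y₂ : Equiv.Perm (Fin n))
    (hx₁ : x₁ = List.formPerm [(0 : Fin n), 1, 3])
    (hy₁ : y₁ = List.formPerm (List.finRange n))
    (hx₂ : x₂ = List.formPerm [(4 : Fin n), 3, 2, 1, 0])
    (hy₂ : y₂ = List.formPerm ((List.finRange n).drop 2)) :
    IsBeauvilleStructureFor (alternatingGroup (Fin n)) x₁ y₁ x₂ y₂ := by
  obtain ⟨h0, h1, h2, h3, h4⟩ := val_lit hn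
  -- values
  have vx₁ := val_x₁ hn
  have vx₂ := val_x₂ hn
  have vy₁ := val_y₁ (n := n)
  have vy₂ := val_y₂ hn
  rw [← hx₁] at vx₁
  rw [← hx₂] at vx₂
  rw [← hy₁] at vy₁
  rw [← hy₂] at vy₂
  -- cycles and supports
  have nd₁ : [(0 : Fin n), 1, 3].Nodup := by
    rw [h0, h1, h3]; simp
  have nd₂ : [(4 : Fin n), 3, 2, 1, 0].Nodup := by
    rw [h0, h1, h2, h3, h4]; simp
  have nd₃ : ((List.finRange n).drop 2).Nodup :=
    (List.nodup_finRange n).sublist (List.drop_sublist _ _)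
  have cx₁ : IsCycle x₁ := hx₁ ▸ List.isCycle_formPerm nd₁ (by simp)
  have cx₂ : IsCycle x₂ := hx₂ ▸ List.isCycle_formPerm nd₂ (by simp)
  have cy₁ : IsCycle y₁ := hy₁ ▸ List.isCycle_formPerm (List.nodup_finRange n) (by simp; omega)
  have cy₂ : IsCycle y₂ := hy₂ ▸ List.isCycle_formPerm nd₃ (by simp; omega)
  have sx₁ : x₁.support.card = 3 := by
    rw [hx₁, card_support_formPerm _ nd₁ (by simp)]; rfl
  have sx₂ : x₂.support.card = 5 := by
    rw [hx₂, card_support_formPerm _ nd₂ (by simp)]; rfl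
  have sy₁ : y₁.support.card = n := by
    rw [hy₁, card_support_formPerm _ (List.nodup_finRange n) (by simp; omega)]; simp
  have sy₂ : y₂.support.card = n - 2 := by
    rw [hy₂, card_support_formPerm _ nd₃ (by simp; omega)]; simp
  have vz₁ : ∀ a : Fin n, ((x₁ * y₁) a : ℕ) = if a.val = 0 then 3 else if a.val = 1 then 2 else
      if a.val = 2 then 0 else if a.val + 1 = n then 1 else a.val + 1 := by
    intro a
    rw [Perm.mul_apply, vx₁, vy₁]
    grind
  have vz₂ : ∀ a : Fin n, ((x₂ * y₂) a : ℕ) = if a.val = 0 then 4 else if a.val = 1 then 0 else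
      if a.val = 2 then 2 else if a.val = 3 then 3 else if a.val + 1 = n then 1 else a.val + 1 := by
    intro a
    rw [Perm.mul_apply, vx₂, vy₂]
    grind
  have step : ∀ (f : Perm (Fin n)) (a b c : Fin n), f.SameCycle a b → (f b).val = c.val →
      f.SameCycle a c := by
    intro f a b c h e
    rw [← Fin.ext e]
    exact sameCycle_apply_right.2 h
  have cz₁ : IsCycle (x₁ * y₁) := by
    have k3 : ∀ (k : ℕ) (hk : k < n), 3 ≤ k → (x₁ * y₁).SameCycle ⟨0, by omega⟩ ⟨k, hk⟩ := by
      intro k hk h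
      induction k, h using Nat.le_induction with
      | base => exact step _ _ _ _ (SameCycle.refl _ _) (by rw [vz₁]; simp)
      | succ k h ih => exact step _ _ _ _ (ih (by omega)) (by rw [vz₁]; grind)
    have k1 : (x₁ * y₁).SameCycle ⟨0, by omega⟩ ⟨1, by omega⟩ :=
      step _ _ _ _ (k3 (n - 1) (by omega) (by omega)) (by rw [vz₁]; grind)
    have k2 : (x₁ * y₁).SameCycle ⟨0, by omega⟩ ⟨2, by omega⟩ :=
      step _ _ _ _ k1 (by rw [vz₁]; grind)
    refine ⟨⟨0, by omega⟩, ?_, ?_⟩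
    · rw [Ne, Fin.ext_iff, vz₁]; simp
    · rintro ⟨y, hy⟩ -
      rcases Nat.lt_or_ge y 3 with h | h
      · interval_cases y
        · exact SameCycle.refl _ _
        · exact k1
        · exact k2
      · exact k3 y hy h
  have sz₁ : (x₁ * y₁).support.card = n := by
    have : (x₁ * y₁).support = Finset.univ := by
      ext a
      have := a.2
      rw [mem_support, Ne, Fin.ext_iff, vz₁]
      simp only [Finset.mem_univ, iff_true]
      grind
    rw [this]; simp
  have cz₂ : IsCycle (x₂ * y₂) := by
    have k3 : ∀ (k : ℕ) (hk : k < n), 4 ≤ k → (x₂ * y₂).SameCycle ⟨0, by omega⟩ ⟨k, hk⟩ := by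
      intro k hk h
      induction k, h using Nat.le_induction with
      | base => exact step _ _ _ _ (SameCycle.refl _ _) (by rw [vz₂]; simp)
      | succ k h ih => exact step _ _ _ _ (ih (by omega)) (by rw [vz₂]; grind)
    have k1 : (x₂ * y₂).SameCycle ⟨0, by omega⟩ ⟨1, by omega⟩ :=
      step _ _ _ _ (k3 (n - 1) (by omega) (by omega)) (by rw [vz₂]; grind)
    refine ⟨⟨0, by omega⟩, ?_, ?_⟩
    · rw [Ne, Fin.ext_iff, vz₂]; simp
    · rintro ⟨y, hy⟩ hne
      rw [Ne, Fin.ext_iff, vz₂] at hne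
      rcases Nat.lt_or_ge y 4 with h | h
      · interval_cases y
        · exact SameCycle.refl _ _
        · exact k1
        · simp at hne
        · simp at hne
      · exact k3 y hy h
  have sz₂ : (x₂ * y₂).support.card = n - 2 := by
    have : (x₂ * y₂).support = ({⟨2, by omega⟩, ⟨3, by omega⟩} : Finset (Fin n))ᶜ := by
      ext a
      have := a.2
      rw [mem_support, Ne, Fin.ext_iff, vz₂]
      simp only [Finset.mem_compl, Finset.mem_insert, Finset.mem_singleton, Fin.ext_iff]
      grind
    rw [this, Finset.card_compl, Finset.card_pair (by simp)]; simp
  refine ⟨?_, ?_, ?_⟩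
  · -- first generation statement
    apply le_antisymm
    · rw [Subgroup.closure_le]
      rintro z (rfl | rfl)
      · exact cycle_mem_alternating cx₁ (by rw [sx₁]; decide)
      · exact cycle_mem_alternating cy₁ (by rw [sy₁]; exact hodd)
    · have mx : x₁ ∈ Subgroup.closure {x₁, y₁} := Subgroup.subset_closure (by simp)
      have my : y₁ ∈ Subgroup.closure {x₁, y₁} := Subgroup.subset_closure (by simp)
      refine alternating_le_of_connected _ mx (card_support_eq_three_iff.1 sx₁) ?_
      intro r hr hinv hτ
      have r01 : ∀ (k : ℕ) (hk : k + 1 < n), r ⟨k, by omega⟩ ⟨k + 1, hk⟩ := by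
        intro k
        induction k with
        | zero =>
          intro hk
          have e : x₁ ⟨0, by omega⟩ = ⟨0 + 1, hk⟩ := by
            apply Fin.ext; rw [vx₁]; simp
          rw [← e]
          exact hτ _
        | succ k ih =>
          intro hk
          have := hinv _ my _ _ (ih (by omega))
          have e1 : y₁ ⟨k, by omega⟩ = ⟨k + 1, by omega⟩ := by
            apply Fin.ext; rw [vy₁]; grind
          have e2 : y₁ ⟨k + 1, by omega⟩ = ⟨k + 1 + 1, by omega⟩ := by
            apply Fin.ext; rw [vy₁]; grind
          rwa [e1, e2] at this
      refine rel_total r hr ?_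
      rintro ⟨a, ha⟩ ⟨b, hb⟩ h
      simp only at h
      subst h
      exact r01 a hb
  · -- second generation statement
    apply le_antisymm
    · rw [Subgroup.closure_le]
      rintro z (rfl | rfl)
      · exact cycle_mem_alternating cx₂ (by rw [sx₂]; decide)
      · exact cycle_mem_alternating cy₂ (by rw [sy₂]; exact Nat.Odd.sub_even (by omega) hodd even_two)
    · set H := Subgroup.closure {x₂, y₂} with hH
      have mx : x₂ ∈ H := Subgroup.subset_closure (by simp)
      have my : y₂ ∈ H := Subgroup.subset_closure (by simp)
      let p (k : ℕ) (hk : k < 7) : Fin n := ⟨k, by omega⟩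
      let p0 := p 0 (by omega)
      let p1 := p 1 (by omega)
      let p2 := p 2 (by omega)
      let p3 := p 3 (by omega)
      let p4 := p 4 (by omega)
      let p5 := p 5 (by omega)
      let t : Perm (Fin n) := swap p1 p2 * swap p4 p5
      have ht : t * (y₂ * x₂) = x₂ * y₂ := by
        ext a
        have ha := a.2
        have hb : ((y₂ * x₂) a).val = if a.val = 0 then 5 else if a.val < 3 then a.val - 1 else
            if a.val < 5 then a.val else if a.val + 1 = n then 2 else a.val + 1 := by
          rw [Perm.mul_apply, vy₂, vx₂]
          clear * - ha hn
          split_ifs <;> omega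
        rw [vz₂, Perm.mul_apply]
        generalize (y₂ * x₂) a = b at hb
        have hc : (swap p4 p5 b).val = if b.val = 4 then 5 else if b.val = 5 then 4 else b.val := by
          simp only [p4, p5, p, swap_apply_def, Fin.ext_iff, apply_ite Fin.val]
        simp only [t, Perm.mul_apply]
        generalize swap p4 p5 b = c at hc
        have hd : (swap p1 p2 c).val = if c.val = 1 then 2 else if c.val = 2 then 1 else c.val := by
          simp only [p1, p2, p, swap_apply_def, Fin.ext_iff, apply_ite Fin.val]
        rw [hd]
        generalize c.val = c at *
        generalize b.val = b at *
        generalize a.val = a at *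
        clear * - ha hn hb hc
        split_ifs at hb <;> split_ifs at hc <;> split_ifs <;> omega
      have mt : t ∈ H := by
        rw [eq_mul_inv_of_mul_eq ht]
        exact H.mul_mem (H.mul_mem mx my) (H.inv_mem (H.mul_mem my mx))
      have X : ∀ a b : Fin n, b.val = (if a.val = 0 then 4 else if a.val < 5 then a.val - 1 else a.val)
          → x₂ a = b := fun a b h => Fin.ext (by rw [vx₂, h])
      have Y : ∀ a b : Fin n, b.val = (if a.val < 2 then a.val else if a.val + 1 = n then 2 else
          a.val + 1) → y₂ a = b := fun a b h => Fin.ext (by rw [vy₂, h])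
      have mu : swap p0 p1 * swap p3 p5 ∈ H := by
        have : x₂ * t * x₂⁻¹ = swap p0 p1 * swap p3 p5 := by
          have e : x₂ * t * x₂⁻¹ = (x₂ * swap p1 p2 * x₂⁻¹) * (x₂ * swap p4 p5 * x₂⁻¹) := by
            simp only [t]; group
          rw [e, ← swap_apply_apply, ← swap_apply_apply, X p1 p0 (by simp [p1, p0, p]),
            X p2 p1 (by simp [p1, p2, p]), X p4 p3 (by simp [p3, p4, p]),
            X p5 p5 (by simp [p5, p])]
        rw [← this]
        exact H.mul_mem (H.mul_mem mx mt) (H.inv_mem mx)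
      let w : Fin n := y₂ (y₂ p5)
      have hw : w.val = if n = 7 then 2 else 7 := by
        simp only [w, vy₂, p5, p]
        grind
      have mv : swap p0 p1 * swap p5 w ∈ H := by
        have : (y₂ * y₂) * (swap p0 p1 * swap p3 p5) * (y₂ * y₂)⁻¹ = swap p0 p1 * swap p5 w := by
          have e : (y₂ * y₂) * (swap p0 p1 * swap p3 p5) * (y₂ * y₂)⁻¹ =
              ((y₂ * y₂) * swap p0 p1 * (y₂ * y₂)⁻¹) * ((y₂ * y₂) * swap p3 p5 * (y₂ * y₂)⁻¹) := by
            group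
          rw [e, ← swap_apply_apply, ← swap_apply_apply]
          simp only [Perm.mul_apply]
          rw [Y p0 p0 (by simp [p0, p]), Y p0 p0 (by simp [p0, p]), Y p1 p1 (by simp [p1, p]),
            Y p1 p1 (by simp [p1, p]), Y p3 p4 (by simp [p3, p4, p]; omega),
            Y p4 p5 (by simp [p5, p4, p]; omega)]
        rw [← this]
        exact H.mul_mem (H.mul_mem (H.mul_mem my my) mu) (H.inv_mem (H.mul_mem my my))
      have mτ : swap p5 p3 * swap p5 w ∈ H := by
        have : (swap p0 p1 * swap p3 p5)⁻¹ * (swap p0 p1 * swap p5 w) = swap p5 p3 * swap p5 w := by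
          rw [swap_comm p5 p3, mul_inv_rev, swap_inv, swap_inv, mul_assoc, swap_mul_self_mul]
        rw [← this]
        exact H.mul_mem (H.inv_mem mu) mv
      have w3 : p3 ≠ w := by
        rw [Ne, Fin.ext_iff, hw]; simp only [p3, p]; grind
      have w5 : p5 ≠ w := by
        rw [Ne, Fin.ext_iff, hw]; simp only [p5, p]; grind
      have d53 : p5 ≠ p3 := by
        rw [Ne, Fin.ext_iff]; simp [p5, p3, p]
      refine alternating_le_of_connected H mτ (isThreeCycle_swap_mul_swap_same d53 w5 w3) ?_
      intro r hr hinv hτ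
      have r35 : r p3 p5 := by
        have := hτ p3
        rwa [Perm.mul_apply, swap_apply_of_ne_of_ne d53.symm w3, swap_apply_right] at this
      have x55 : x₂ p5 = p5 := X _ _ (by simp [p5, p])
      have r25 : r p2 p5 := by
        have := hinv _ mx _ _ r35
        rwa [x55, X p3 p2 (by simp [p2, p3, p])] at this
      have r15 : r p1 p5 := by
        have := hinv _ mx _ _ r25
        rwa [x55, X p2 p1 (by simp [p2, p1, p])] at this
      have r05 : r p0 p5 := by
        have := hinv _ mx _ _ r15
        rwa [x55, X p1 p0 (by simp [p0, p1, p])] at this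
      have r45 : r p4 p5 := by
        have := hinv _ mx _ _ r05
        rwa [x55, X p0 p4 (by simp [p0, p4, p])] at this
      have r4 : ∀ (k : ℕ) (hk : k + 1 < n), 4 ≤ k → r ⟨k, by omega⟩ ⟨k + 1, hk⟩ := by
        intro k hk h
        induction k, h using Nat.le_induction with
        | base => exact r45
        | succ k h ih =>
          have := hinv _ my _ _ (ih (by omega))
          rwa [Y ⟨k, by omega⟩ ⟨k + 1, by omega⟩ (by grind),
            Y ⟨k + 1, by omega⟩ ⟨k + 1 + 1, hk⟩ (by grind)] at this
      refine rel_total r hr ?_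
      rintro ⟨a, ha⟩ ⟨b, hb⟩ h
      simp only at h
      subst h
      rcases Nat.lt_or_ge a 4 with h | h
      · interval_cases a
        · exact hr.trans r05 (hr.symm r15)
        · exact hr.trans r15 (hr.symm r25)
        · exact hr.trans r25 (hr.symm r35)
        · exact hr.trans r35 (hr.symm r45)
      · exact r4 a hb h
  · -- disjointness
    apply Set.eq_singleton_iff_unique_mem.2
    constructor
    · exact ⟨⟨0, 1, Subgroup.one_mem _, by simp⟩, ⟨0, 1, Subgroup.one_mem _, by simp⟩⟩
    · rintro a ⟨⟨i, g, -, h⟩, ⟨j, k, -, h'⟩⟩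
      by_contra hne
      have c1 : a.support.card = 3 ∨ a.support.card = n := by
        rcases h with rfl | rfl | rfl
        · left; rw [conj_pow_cycle cx₁ _ _ hne, sx₁]
        · right; rw [conj_pow_cycle cy₁ _ _ hne, sy₁]
        · right; rw [conj_pow_cycle cz₁ _ _ hne, sz₁]
      have c2 : a.support.card = 5 ∨ a.support.card = n - 2 := by
        rcases h' with rfl | rfl | rfl
        · left; rw [conj_pow_cycle cx₂ _ _ hne, sx₂]
        · right; rw [conj_pow_cycle cy₂ _ _ hne, sy₂]
        · right; rw [conj_pow_cycle cz₂ _ _ hne, sz₂]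
      omega
end

section
/- Let n ≥ 8 be even, and in the alternating group A_n on {1,…,n} let x₁ = (1,2)(3,4) and y₁ = (2,3,4,…,n). Then x₁ and y₁ generate A_n, and their product x₁y₁ = (1,3,5,6,…,n,2) is an (n−1)-cycle. -/
/-- Values of the long cycle `(2,3,…,n)` (zero-based). -/
lemma aux_y_val (n : ℕ) (hn : 8 ≤ n) (i : Fin n) :
    ((List.formPerm ((List.finRange n).drop 1) i : Fin n) : ℕ) =
      (if (i : ℕ) = 0 then (0 : ℕ) else if (i : ℕ) = n - 1 then 1 else (i : ℕ) + 1 : ℕ) := by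
  have hnd : ((List.finRange n).drop 1).Nodup := (List.nodup_finRange n).drop
  have hlen : ((List.finRange n).drop 1).length = n - 1 := by simp
  by_cases h0 : (i : ℕ) = 0
  · rw [List.formPerm_apply_of_notMem]
    · simp [h0]
    · intro hmem
      obtain ⟨j, hj, hji⟩ := List.getElem_of_mem hmem
      simp [Fin.ext_iff] at hji
      omega
  · have hj : (i : ℕ) - 1 < ((List.finRange n).drop 1).length := by omega
    have hi : ((List.finRange n).drop 1)[(i : ℕ) - 1] = i := by
      simp [Fin.ext_iff]; omega
    have h := List.formPerm_apply_getElem _ hnd ((i : ℕ) - 1) hj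
    rw [hi] at h
    rw [h]
    simp only [List.getElem_drop, List.getElem_finRange, hlen, Fin.val_cast]
    split_ifs with h1
    · have : (i : ℕ) - 1 + 1 = n - 1 := by omega
      rw [this, Nat.mod_self]
    · rw [Nat.mod_eq_of_lt (by omega)]; omega

/-- Values of the cycle `(1,3,5,6,…,n,2)` (zero-based). -/
lemma aux_z_val (n : ℕ) [NeZero n] (hn : 8 ≤ n) :
    ([(0 : Fin n), 2] ++ (List.finRange n).drop 4 ++ [1]).Nodup ∧ ∀ i : Fin n,
    ((List.formPerm ([(0 : Fin n), 2] ++ (List.finRange n).drop 4 ++ [1]) i : Fin n) : ℕ) =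
      (if (i : ℕ) = 0 then (2 : ℕ) else if (i : ℕ) = 1 then 0 else if (i : ℕ) = 2 then 4 else
      if (i : ℕ) = 3 then 3 else if (i : ℕ) = n - 1 then 1 else (i : ℕ) + 1 : ℕ) := by
  have e0 : ((0 : Fin n) : ℕ) = 0 := rfl
  have e1 : ((1 : Fin n) : ℕ) = 1 :=
    Nat.mod_eq_of_lt (show 1 < n by omega)
  have e2 : ((2 : Fin n) : ℕ) = 2 :=
    Nat.mod_eq_of_lt (show 2 < n by omega)
  set L := [(0 : Fin n), 2] ++ (List.finRange n).drop 4 ++ [1] with hL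
  have hlen : L.length = n - 1 := by simp [hL]; omega
  have hget : ∀ (k : ℕ) (hk : k < L.length), ((L[k] : Fin n) : ℕ) =
      (if k = 0 then 0 else if k = 1 then 2 else if k = n - 2 then 1 else k + 2 : ℕ) := by
    intro k hk
    simp only [hL, List.getElem_append, List.length_append, List.length_cons, List.length_nil,
      List.length_drop, List.length_finRange]
    rcases k with _ | _ | k
    · simp
    · have : 1 < 2 + (n - 4) := by omega
      simp [this]
      exact Nat.mod_eq_of_lt (by omega)
    · by_cases h : k + 2 = n - 2
      · have : ¬ (k + 1 + 1 < 0 + 1 + 1 + (n - 4)) := by omega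
        have h1 : n - 2 ≠ 0 := by omega
        have h2 : n - 2 ≠ 1 := by omega
        rw [dif_neg this]
        simp [h, h1, h2]
        exact Nat.mod_eq_of_lt (by omega)
      · have : (k + 1 + 1 < 0 + 1 + 1 + (n - 4)) := by omega
        simp [this]
        split_ifs <;> omega
  have hnd : L.Nodup := by
    rw [List.nodup_iff_injective_get]
    intro a b hab
    have ha := hget a a.2
    have hb := hget b b.2
    have : L[(a : ℕ)] = L[(b : ℕ)] := hab
    rw [this, hb] at ha
    have := a.2
    have := b.2
    ext
    split_ifs at ha <;> omega
  refine ⟨hnd, fun i => ?_⟩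
  have key : ∀ k (hk : k < L.length), ((L[k] : Fin n) : ℕ) = i →
      ((L.formPerm i : Fin n) : ℕ) = if k = n - 2 then 0 else if k = 0 then 2 else
        if k = n - 3 then 1 else k + 3 := by
    intro k hk h
    have h' : L[k] = i := Fin.ext h
    rw [← h', List.formPerm_apply_getElem _ hnd k hk, hget]
    by_cases hk2 : k = n - 2
    · have : k + 1 = L.length := by omega
      rw [this, Nat.mod_self]
      simp [hk2]
    · rw [Nat.mod_eq_of_lt (by omega)]
      split_ifs <;> omega
  have hi := i.2
  by_cases h3 : (i : ℕ) = 3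
  · rw [List.formPerm_apply_of_notMem]
    · simp [h3]
    · intro hmem
      obtain ⟨j, hj, hji⟩ := List.getElem_of_mem hmem
      have := hget j hj
      rw [hji] at this
      split_ifs at this <;> omega
  · by_cases h0 : (i : ℕ) = 0
    · rw [key 0 (by omega) (by rw [hget]; simp [h0])]
      split_ifs <;> omega
    · by_cases h1 : (i : ℕ) = 1
      · rw [key (n - 2) (by omega) (by rw [hget]; split_ifs <;> omega)]
        split_ifs <;> omega
      · by_cases h2 : (i : ℕ) = 2
        · have a1 : 1 ≠ n - 2 := by omega
          have a2 : 1 ≠ n - 3 := by omega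
          rw [key 1 (by omega) (by rw [hget]; simp [h2])]
          simp [h2, a1, a2]
        · rw [key ((i : ℕ) - 2) (by omega) (by rw [hget]; split_ifs <;> omega)]
          split_ifs <;> omega

/-- The square of `(a b)(c d) · (a e)(f g)` is a 3-cycle. -/
lemma aux_three {α : Type*} [Fintype α] [DecidableEq α] (a b c d e f g : α)
    (h : [a, b, c, d, e, f, g].Nodup) :
    (((Equiv.swap a b * Equiv.swap c d) * (Equiv.swap a e * Equiv.swap f g)) ^ 2).IsThreeCycle := by
  have : ((Equiv.swap a b * Equiv.swap c d) * (Equiv.swap a e * Equiv.swap f g)) ^ 2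
      = Equiv.swap a e * Equiv.swap a b := by
    ext i
    simp only [List.nodup_cons, List.mem_cons, List.not_mem_nil, not_or, or_false] at h
    simp only [pow_two, Equiv.Perm.mul_apply, Equiv.swap_apply_def]
    grind
  rw [this]
  simp only [List.nodup_cons, List.mem_cons, List.not_mem_nil, not_or, or_false] at h
  apply Equiv.Perm.isThreeCycle_swap_mul_swap_same <;> grind

theorem alternatingGroup_even_first_pair
    (n : ℕ) [NeZero n] (hn : 8 ≤ n) (heven : Even n)
    (x₁ y₁ : Equiv.Perm (Fin n))
    (hx₁ : x₁ = Equiv.swap (0 : Fin n) 1 * Equiv.swap 2 3)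
    (hy₁ : y₁ = List.formPerm ((List.finRange n).drop 1)) :
    Subgroup.closure {x₁, y₁} = alternatingGroup (Fin n) ∧
    y₁ * x₁ = List.formPerm ([(0 : Fin n), 2] ++ (List.finRange n).drop 4 ++ [1]) ∧
    (y₁ * x₁).IsCycle ∧ (y₁ * x₁).support.card = n - 1 := by
  have e0 : ((0 : Fin n) : ℕ) = 0 := rfl
  have e1 : ((1 : Fin n) : ℕ) = 1 :=
    Nat.mod_eq_of_lt (show 1 < n by omega)
  have e2 : ((2 : Fin n) : ℕ) = 2 :=
    Nat.mod_eq_of_lt (show 2 < n by omega)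
  have e3 : ((3 : Fin n) : ℕ) = 3 :=
    Nat.mod_eq_of_lt (show 3 < n by omega)
  have e4 : ((4 : Fin n) : ℕ) = 4 :=
    Nat.mod_eq_of_lt (show 4 < n by omega)
  have e5 : ((5 : Fin n) : ℕ) = 5 :=
    Nat.mod_eq_of_lt (show 5 < n by omega)
  have e6 : ((6 : Fin n) : ℕ) = 6 :=
    Nat.mod_eq_of_lt (show 6 < n by omega)
  have hyv := aux_y_val n hn
  rw [← hy₁] at hyv
  obtain ⟨hznd, hzv⟩ := aux_z_val n hn
  have hzlen : ([(0 : Fin n), 2] ++ (List.finRange n).drop 4 ++ [1]).length = n - 1 := by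
    simp; omega
  have hprod : y₁ * x₁ = List.formPerm ([(0 : Fin n), 2] ++ (List.finRange n).drop 4 ++ [1]) := by
    ext i
    rw [hzv, Equiv.Perm.mul_apply, hyv, hx₁, Equiv.Perm.mul_apply]
    have := i.2
    have hxv : ((Equiv.swap (0 : Fin n) 1 (Equiv.swap 2 3 i) : Fin n) : ℕ) =
        (if (i : ℕ) = 0 then 1 else if (i : ℕ) = 1 then 0 else if (i : ℕ) = 2 then 3 else
          if (i : ℕ) = 3 then 2 else (i : ℕ) : ℕ) := by
      simp only [Equiv.swap_apply_def]
      grind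
    rw [hxv]
    clear hyv hzv hxv
    grind
  refine ⟨?_, hprod, ?_, ?_⟩
  · have hxm : x₁ ∈ Subgroup.closure {x₁, y₁} := Subgroup.subset_closure (by simp)
    have hym : y₁ ∈ Subgroup.closure {x₁, y₁} := Subgroup.subset_closure (by simp)
    apply le_antisymm
    · rw [Subgroup.closure_le]
      intro g hg
      have hynd : ((List.finRange n).drop 1).Nodup := (List.nodup_finRange n).drop
      rcases hg with rfl | rfl
      · rw [SetLike.mem_coe, Equiv.Perm.mem_alternatingGroup, hx₁, Equiv.Perm.sign_mul,
          Equiv.Perm.sign_swap, Equiv.Perm.sign_swap]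
        · rfl
        · rw [Ne, Fin.ext_iff, e2, e3]; omega
        · rw [Ne, Fin.ext_iff, e0, e1]; omega
      · rw [SetLike.mem_coe, Equiv.Perm.mem_alternatingGroup]
        have hc : g.IsCycle := by
          rw [hy₁]; exact List.isCycle_formPerm hynd (by simp; omega)
        rw [hc.sign, hy₁, List.support_formPerm_of_nodup _ hynd,
          List.toFinset_card_of_nodup hynd]
        · have : Odd (n - 1) := by
            obtain ⟨k, hk⟩ := heven
            exact ⟨k - 1, by omega⟩
          simp [this.neg_one_pow]
        · intro a ha
          have := congrArg List.length ha
          simp at this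
          omega
    · -- powers of `y₁`
      have hpow : ∀ k : ℕ, k ≤ n - 2 → (((y₁ ^ k) 1 : Fin n) : ℕ) = k + 1 := by
        intro k
        induction k with
        | zero => intro _; exact e1
        | succ k ih =>
          intro hk
          rw [pow_succ', Equiv.Perm.mul_apply, hyv, ih (by omega)]
          split_ifs <;> omega
      have hy0 : y₁ 0 = 0 := by
        ext; rw [hyv]; simp
      have hx1 : x₁ 1 = 0 := by
        rw [hx₁, Equiv.Perm.mul_apply, Equiv.swap_apply_of_ne_of_ne (a := 2), Equiv.swap_apply_right]
        · rw [Ne, Fin.ext_iff, e1, e2]; omega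
        · rw [Ne, Fin.ext_iff, e1, e3]; omega
      have hpow0 : ∀ k : ℕ, (y₁ ^ k) 0 = 0 := by
        intro k
        induction k with
        | zero => simp
        | succ k ih => rw [pow_succ', Equiv.Perm.mul_apply, ih, hy0]
      -- move any nonzero point to `1` fixing `0`
      have hmove : ∀ b : Fin n, b ≠ 0 → ∃ g ∈ Subgroup.closure {x₁, y₁}, g 0 = 0 ∧ g b = 1 := by
        intro b hb
        have hb' : (b : ℕ) ≠ 0 := fun h => hb (Fin.ext h)
        refine ⟨(y₁ ^ ((b : ℕ) - 1))⁻¹, inv_mem (pow_mem hym _), ?_, ?_⟩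
        · rw [Equiv.Perm.inv_eq_iff_eq, hpow0]
        · rw [Equiv.Perm.inv_eq_iff_eq]
          ext
          rw [hpow _ (by omega)]
          omega
      have hmove0 : ∀ a : Fin n, ∃ g ∈ Subgroup.closure {x₁, y₁}, g a = 0 := by
        intro a
        by_cases ha : a = 0
        · exact ⟨1, one_mem _, by simp [ha]⟩
        · obtain ⟨g, hg, -, h1⟩ := hmove a ha
          exact ⟨x₁ * g, mul_mem hxm hg, by rw [Equiv.Perm.mul_apply, h1, hx1]⟩
      have hmove2 : ∀ a b : Fin n, a ≠ b →
          ∃ g ∈ Subgroup.closure {x₁, y₁}, g a = 0 ∧ g b = 1 := by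
        intro a b hab
        obtain ⟨g, hg, hga⟩ := hmove0 a
        have : g b ≠ 0 := by
          rw [← hga]; exact fun h => hab (g.injective h).symm
        obtain ⟨k, hk, hk0, hk1⟩ := hmove _ this
        exact ⟨k * g, mul_mem hk hg, by simp [hga, hk0], by simp [hk1]⟩
      have h2 : MulAction.IsMultiplyPretransitive (Subgroup.closure {x₁, y₁}) (Fin n) 2 := by
        rw [MulAction.is_two_pretransitive_iff]
        intro a b c d hab hcd
        obtain ⟨g, hg, ga, gb⟩ := hmove2 a b hab
        obtain ⟨k, hk, kc, kd⟩ := hmove2 c d hcd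
        refine ⟨⟨k⁻¹ * g, mul_mem (inv_mem hk) hg⟩, ?_, ?_⟩
        · change k⁻¹ (g a) = c
          rw [ga, Equiv.Perm.inv_eq_iff_eq, kc]
        · change k⁻¹ (g b) = d
          rw [gb, Equiv.Perm.inv_eq_iff_eq, kd]
      have hprim : MulAction.IsPreprimitive (Subgroup.closure {x₁, y₁}) (Fin n) :=
        MulAction.isPreprimitive_of_is_two_pretransitive h2
      have hconj : y₁ ^ 3 * x₁ * (y₁ ^ 3)⁻¹ = Equiv.swap 0 4 * Equiv.swap 5 6 := by
        have h1 : (y₁ ^ 3) 1 = 4 := by ext; rw [hpow 3 (by omega), e4]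
        have h2 : (y₁ ^ 3) 2 = 5 := by
          have : (2 : Fin n) = (y₁ ^ 1) 1 := by ext; rw [hpow 1 (by omega), e2]
          rw [this, ← Equiv.Perm.mul_apply, ← pow_add]
          ext; rw [hpow _ (by omega), e5]
        have h3 : (y₁ ^ 3) 3 = 6 := by
          have : (3 : Fin n) = (y₁ ^ 2) 1 := by ext; rw [hpow 2 (by omega), e3]
          rw [this, ← Equiv.Perm.mul_apply, ← pow_add]
          ext; rw [hpow _ (by omega), e6]
        have hs : ∀ (p : Equiv.Perm (Fin n)) (a b : Fin n),
            p * Equiv.swap a b * p⁻¹ = Equiv.swap (p a) (p b) := by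
          intro p a b
          rw [Equiv.mul_swap_eq_swap_mul, mul_inv_cancel_right]
        have : y₁ ^ 3 * x₁ * (y₁ ^ 3)⁻¹ = (y₁ ^ 3 * Equiv.swap 0 1 * (y₁ ^ 3)⁻¹) *
            (y₁ ^ 3 * Equiv.swap 2 3 * (y₁ ^ 3)⁻¹) := by
          rw [hx₁]; group
        rw [this, hs, hs, hpow0, h1, h2, h3]
      have h3c := aux_three (0 : Fin n) 1 2 3 4 5 6
        (by
          simp only [List.nodup_cons, List.mem_cons, List.not_mem_nil, Fin.ext_iff,
            e0, e1, e2, e3, e4, e5, e6]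
          simp)
      rw [← hconj, ← hx₁] at h3c
      exact Equiv.Perm.alternatingGroup_le_of_isPreprimitive_of_isThreeCycle_mem hprim h3c
        (pow_mem (mul_mem hxm (mul_mem (mul_mem (pow_mem hym 3) hxm)
          (inv_mem (pow_mem hym 3)))) 2)
  · rw [hprod]
    exact List.isCycle_formPerm hznd (by omega)
  · rw [hprod, List.support_formPerm_of_nodup _ hznd, List.toFinset_card_of_nodup hznd, hzlen]
    intro a ha
    have := congrArg List.length ha
    rw [hzlen] at this
    simp at this
    omega
end

section
/- Let n ≥ 8 be even, and in the alternating group A_n on {1,…,n} let x₁ = (1,2)(3,4) and y₁ = (2,3,4,…,n). Then there exist no automorphism φ of A_n and element g ∈ A_n such that gφ(x₁)g⁻¹ = x₁⁻¹ and gφ(y₁)g⁻¹ = y₁⁻¹. -/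
open Equiv Equiv.Perm in
lemma viaEmbeddingHom_swap_aux {α β : Type*} [DecidableEq α] [DecidableEq β] (f : α ↪ β) (a b : α) :
    viaEmbeddingHom f (swap a b) = swap (f a) (f b) := by
  ext z
  rw [viaEmbeddingHom_apply]
  by_cases hz : z ∈ Set.range f
  · obtain ⟨w, rfl⟩ := hz
    rw [viaEmbedding_apply, f.injective.swap_apply]
  · rw [viaEmbedding_apply_of_notMem _ _ _ hz, swap_apply_of_ne_of_ne]
    · rintro rfl; exact hz ⟨_, rfl⟩
    · rintro rfl; exact hz ⟨_, rfl⟩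

/-- The reversal `y ↦ y⁻¹`, `x ↦ x⁻¹` carries the relation on conjugates `y^k x y^(-k)`
with `k = 0,1,3` to the relation with `k = 3,2,0`. -/
lemma reversed_relation_aux {G : Type*} [Group G] (ψ : G →* G) (x y : G) (hxx : x⁻¹ = x)
    (hx : ψ x = x⁻¹) (hy : ψ y = y⁻¹)
    (h : (x * (y * x * y⁻¹) * (y ^ 3 * x * (y ^ 3)⁻¹) * (y * x * y⁻¹)) ^ 2 = 1) :
    ((y ^ 3 * x * (y ^ 3)⁻¹) * (y ^ 2 * x * (y ^ 2)⁻¹) * x * (y ^ 2 * x * (y ^ 2)⁻¹)) ^ 2 = 1 := by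
  have h2 := congrArg ψ h
  simp only [map_pow, map_mul, map_inv, hx, hy, map_one, hxx] at h2
  have h3 : y ^ 3 * (x * (y⁻¹ * x * y⁻¹⁻¹) * (y⁻¹ ^ 3 * x * (y⁻¹ ^ 3)⁻¹)
      * (y⁻¹ * x * y⁻¹⁻¹)) ^ 2 * (y ^ 3)⁻¹ = 1 := by
    rw [h2]; group
  rw [← h3, ← conj_pow]
  congr 1
  group

lemma reversed_relation_subgroup_aux {G : Type*} [Group G] (H : Subgroup G) (ψ : H →* H) (x y : G)
    (hxH : x ∈ H) (hyH : y ∈ H) (hxx : x⁻¹ = x)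
    (hx : ψ ⟨x, hxH⟩ = (⟨x, hxH⟩ : H)⁻¹) (hy : ψ ⟨y, hyH⟩ = (⟨y, hyH⟩ : H)⁻¹)
    (h : (x * (y * x * y⁻¹) * (y ^ 3 * x * (y ^ 3)⁻¹) * (y * x * y⁻¹)) ^ 2 = 1) :
    ((y ^ 3 * x * (y ^ 3)⁻¹) * (y ^ 2 * x * (y ^ 2)⁻¹) * x * (y ^ 2 * x * (y ^ 2)⁻¹)) ^ 2 = 1 := by
  have key := reversed_relation_aux ψ ⟨x, hxH⟩ ⟨y, hyH⟩ (Subtype.ext hxx) hx hy (Subtype.ext h)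
  exact congrArg Subtype.val key

open Equiv in
lemma perm_seven_rel : ((swap 0 1 * swap 2 3) * (swap 0 2 * swap 3 4) * (swap 0 4 * swap 5 6)
    * (swap 0 2 * swap 3 4) : Perm (Fin 7)) ^ 2 = 1 := by
  ext i
  fin_cases i <;> decide

open Equiv in
lemma perm_seven_not_rel : ((swap 0 4 * swap 5 6) * (swap 0 3 * swap 4 5) * (swap 0 1 * swap 2 3)
    * (swap 0 3 * swap 4 5) : Perm (Fin 7)) ^ 2 ≠ 1 := by
  intro h
  have : ∀ i : Fin 7, (((swap 0 4 * swap 5 6) * (swap 0 3 * swap 4 5) * (swap 0 1 * swap 2 3)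
    * (swap 0 3 * swap 4 5) : Perm (Fin 7)) ^ 2) i = i := fun i => by rw [h]; rfl
  revert this
  decide

/-- for even `n ≥ 8`, with `x₁ = (1,2)(3,4)` and `y₁ = (2,3,4,…,n)` in `A_n`,
there is no automorphism `φ` of `A_n` and element `g ∈ A_n` with
`g * φ x₁ * g⁻¹ = x₁⁻¹` and `g * φ y₁ * g⁻¹ = y₁⁻¹`.
Points `1,…,n` are modelled by `Fin n` (zero-based). -/
theorem alternatingGroup_even_first_pair_not_invertible
    (n : ℕ) [NeZero n] (hn : 8 ≤ n) (heven : Even n)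
    (x₁ y₁ : Equiv.Perm (Fin n))
    (hx₁ : x₁ = Equiv.swap (0 : Fin n) 1 * Equiv.swap 2 3)
    (hy₁ : y₁ = List.formPerm ((List.finRange n).drop 1))
    (hx₁A : x₁ ∈ alternatingGroup (Fin n)) (hy₁A : y₁ ∈ alternatingGroup (Fin n)) :
    ¬ ∃ (φ : alternatingGroup (Fin n) ≃* alternatingGroup (Fin n))
        (g : alternatingGroup (Fin n)),
        g * φ ⟨x₁, hx₁A⟩ * g⁻¹ = (⟨x₁, hx₁A⟩ : alternatingGroup (Fin n))⁻¹ ∧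
        g * φ ⟨y₁, hy₁A⟩ * g⁻¹ = (⟨y₁, hy₁A⟩ : alternatingGroup (Fin n))⁻¹ := by
  rintro ⟨φ, g, hx, hy⟩
  let f : Fin 7 ↪ Fin n := Fin.castLEEmb (by omega)
  have e0 : (0 : Fin n) = f 0 := by ext; simp [f]
  have e1 : (1 : Fin n) = f 1 := by
    ext; simp [f, Nat.mod_eq_of_lt (show 1 < n by omega)]
  have e2 : (2 : Fin n) = f 2 := by
    ext; simp [f, Fin.coe_ofNat_eq_mod, Nat.mod_eq_of_lt (show 2 < n by omega)]
  have e3 : (3 : Fin n) = f 3 := by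
    ext; simp [f, Fin.coe_ofNat_eq_mod, Nat.mod_eq_of_lt (show 3 < n by omega)]
  have y0 : y₁ (f 0) = f 0 := by
    rw [hy₁]
    apply List.formPerm_apply_of_notMem
    intro hmem
    obtain ⟨i, hi, h⟩ := List.getElem_of_mem hmem
    have := congrArg Fin.val h
    simp [f] at this
  have ys : ∀ i : ℕ, ∀ (h : i + 2 < 7), y₁ (f ⟨i + 1, by omega⟩) = f ⟨i + 2, h⟩ := by
    intro i h
    have hnd : ((List.finRange n).drop 1).Nodup := (List.nodup_finRange n).sublist (List.drop_sublist _ _)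
    have := List.formPerm_apply_lt_getElem _ hnd i (by simp; omega)
    rw [hy₁]
    convert this using 2
    · ext; simp [f]
    · ext; simp [f]
  have y1 : y₁ (f 1) = f 2 := ys 0 (by norm_num)
  have y2 : y₁ (f 2) = f 3 := ys 1 (by norm_num)
  have y3 : y₁ (f 3) = f 4 := ys 2 (by norm_num)
  have y4 : y₁ (f 4) = f 5 := ys 3 (by norm_num)
  have y5 : y₁ (f 5) = f 6 := ys 4 (by norm_num)
  let F := Equiv.Perm.viaEmbeddingHom f
  have cj : ∀ a b c d a' b' c' d' : Fin 7, y₁ (f a) = f a' → y₁ (f b) = f b' →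
      y₁ (f c) = f c' → y₁ (f d) = f d' →
      y₁ * F (Equiv.swap a b * Equiv.swap c d) * y₁⁻¹ = F (Equiv.swap a' b' * Equiv.swap c' d') := by
    intro a b c d a' b' c' d' ha hb hc hd
    simp only [F, map_mul, viaEmbeddingHom_swap_aux, ← ha, ← hb, ← hc, ← hd,
      Equiv.swap_apply_apply]
    group
  have X0 : x₁ = F (Equiv.swap 0 1 * Equiv.swap 2 3) := by
    simp only [F, map_mul, viaEmbeddingHom_swap_aux, hx₁, e0, e1, e2, e3]
  have X1 : y₁ * x₁ * y₁⁻¹ = F (Equiv.swap 0 2 * Equiv.swap 3 4) := by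
    rw [X0]; exact cj _ _ _ _ _ _ _ _ y0 y1 y2 y3
  have X2 : y₁ ^ 2 * x₁ * (y₁ ^ 2)⁻¹ = F (Equiv.swap 0 3 * Equiv.swap 4 5) := by
    rw [← cj _ _ _ _ _ _ _ _ y0 y2 y3 y4, ← X1, pow_two]; group
  have X3 : y₁ ^ 3 * x₁ * (y₁ ^ 3)⁻¹ = F (Equiv.swap 0 4 * Equiv.swap 5 6) := by
    rw [← cj _ _ _ _ _ _ _ _ y0 y3 y4 y5, ← X2, pow_succ' y₁ 2]; group
  have hxx : x₁⁻¹ = x₁ := by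
    rw [X0, ← map_inv]; congr 1
    decide
  have key := reversed_relation_subgroup_aux (alternatingGroup (Fin n))
    ((MulAut.conj g).toMonoidHom.comp φ.toMonoidHom)
    x₁ y₁ hx₁A hy₁A hxx (by simpa using hx) (by simpa using hy)
    (by rw [X3, X1, X0, ← map_mul, ← map_mul, ← map_mul, ← map_pow, perm_seven_rel, map_one])
  rw [X3, X2, X0, ← map_mul, ← map_mul, ← map_mul, ← map_pow, ← map_one F] at key
  exact perm_seven_not_rel (Equiv.Perm.viaEmbeddingHom_injective f key)
end

section
/- Let n ≥ 8 be even, and in the alternating group A_n on {1,…,n} let x₂ = (1,2,3)(4,5,…,n) and y₂ = (5,4,3,2,1). Then x₂ and y₂ generate A_n, and their product x₂y₂ = (3,5,6,…,n) is an (n−3)-cycle. -/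
open Equiv Equiv.Perm in
lemma aux_three_cycles {n : ℕ} (H : Subgroup (Perm (Fin n))) (p q : Fin n) (hpq : p ≠ q)
    (h : ∀ k, k ≠ p → k ≠ q → swap p q * swap q k ∈ H) :
    alternatingGroup (Fin n) ≤ H := by
  have rot : ∀ a b c : Fin n, a ≠ b → a ≠ c → b ≠ c →
      swap a b * swap b c ∈ H → swap b c * swap c a ∈ H := by
    intro a b c hab hac hbc hm
    have : swap b c * swap c a = swap a b * swap b c := by
      ext i; simp only [Perm.mul_apply, swap_apply_def]; grind
    rwa [this]
  have inv : ∀ a b c : Fin n, a ≠ b → a ≠ c → b ≠ c →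
      swap a b * swap b c ∈ H → swap a c * swap c b ∈ H := by
    intro a b c hab hac hbc hm
    have : swap a c * swap c b = (swap a b * swap b c)⁻¹ := by
      rw [mul_inv_rev, swap_inv, swap_inv]
      ext i; simp only [Perm.mul_apply, swap_apply_def]; grind
    rw [this]; exact H.inv_mem hm
  have step : ∀ a b c d : Fin n, a ≠ b → a ≠ c → a ≠ d → b ≠ c → b ≠ d → c ≠ d →
      swap a b * swap b c ∈ H → swap a b * swap b d ∈ H → swap b d * swap d c ∈ H := by
    intro a b c d hab hac had hbc hbd hcd h1 h2
    have : swap b d * swap d c =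
        (swap a b * swap b d) * (swap a b * swap b c) * (swap a b * swap b d)⁻¹ := by
      rw [eq_mul_inv_iff_mul_eq]
      ext i; simp only [Perm.mul_apply, swap_apply_def]; grind
    rw [this]; exact H.mul_mem (H.mul_mem h2 h1) (H.inv_mem h2)
  rw [← closure_three_cycles_eq_alternating, Subgroup.closure_le]
  intro g hg
  have hg3 : g.IsThreeCycle := hg
  obtain ⟨a, ha⟩ : ∃ a, a ∈ g.support := by
    have := hg3.card_support
    exact Finset.card_pos.mp (by omega)
  have hnd := hg3.nodup_iff_mem_support.mpr ha
  have he := hg3.eq_swap_mul_swap_iff_mem_support.mpr ha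
  show g ∈ H
  rw [he]
  generalize g a = b at hnd ⊢
  generalize g b = c at hnd ⊢
  have hab : a ≠ b := by grind
  have hac : a ≠ c := by grind
  have hbc : b ≠ c := by grind
  clear he hnd ha hg hg3
  obtain ⟨P, hP⟩ : ∃ P : Fin n → Fin n → Fin n → Prop, ∀ u v w, P u v w ↔
      swap u v * swap v w ∈ H := ⟨_, fun _ _ _ => Iff.rfl⟩
  simp only [← hP] at *
  have A : ∀ k l, k ≠ p → k ≠ q → l ≠ p → l ≠ q → k ≠ l → P q k l := by
    intro k l h1 h2 h3 h4 h5
    exact step p q l k hpq h3.symm h1.symm h4.symm h2.symm h5.symm (h l h3 h4) (h k h1 h2)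
  have h' : ∀ k, k ≠ p → k ≠ q → P q p k := by
    intro k h1 h2
    exact rot k q p h2 h1 hpq.symm (rot p k q h1.symm hpq h2
      (inv p q k hpq h1.symm h2.symm (h k h1 h2)))
  have B : ∀ k l, k ≠ p → k ≠ q → l ≠ p → l ≠ q → k ≠ l → P p k l := by
    intro k l h1 h2 h3 h4 h5
    exact step q p l k hpq.symm h4.symm h2.symm h3.symm h1.symm h5.symm (h' l h3 h4) (h' k h1 h2)
  have C : ∀ k l m, k ≠ p → k ≠ q → l ≠ p → l ≠ q → m ≠ p → m ≠ q → k ≠ l → k ≠ m → l ≠ m →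
      P k l m := by
    intro k l m h1 h2 h3 h4 h5 h6 h7 h8 h9
    exact step p k m l h1.symm h5.symm h3.symm h8 h7 h9.symm
      (B k m h1 h2 h5 h6 h8) (B k l h1 h2 h3 h4 h7)
  clear step hP
  grind

lemma aux_apply_inv {α : Type*} (f : Equiv.Perm α) (a : α) : f (f⁻¹ a) = a := by
  rw [← Equiv.Perm.mul_apply, mul_inv_cancel, Equiv.Perm.one_apply]

lemma aux_formPerm_drop (n k : ℕ) (hk : k + 2 ≤ n) (i : Fin n) :
    (List.formPerm ((List.finRange n).drop k) i).val =
      if i.val < k then i.val else if i.val + 1 = n then k else i.val + 1 := by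
  have hnd : ((List.finRange n).drop k).Nodup := (List.nodup_finRange n).sublist (List.drop_sublist _ _)
  split_ifs with h1 h2
  · rw [List.formPerm_apply_of_notMem]
    intro hm
    obtain ⟨j, hj, e⟩ := List.mem_iff_getElem.mp hm
    simp at e
    have := congrArg Fin.val e
    simp at this
    omega
  all_goals
    have hl : i.val - k < ((List.finRange n).drop k).length := by simp; omega
    have e : i = ((List.finRange n).drop k)[i.val - k] := by
      ext; simp; omega
    have := List.formPerm_apply_getElem _ hnd _ hl
    rw [← e] at this
    rw [this]
    simp
  · have : (i.val - k + 1) = n - k := by omega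
    simp [this]
  · rw [Nat.mod_eq_of_lt] <;> omega

set_option maxHeartbeats 4000000 in
theorem alternatingGroup_even_second_pair
    (n : ℕ) [NeZero n] (hn : 8 ≤ n) (heven : Even n)
    (x₂ y₂ : Equiv.Perm (Fin n))
    (hx₂ : x₂ = List.formPerm [(0 : Fin n), 1, 2] * List.formPerm ((List.finRange n).drop 3))
    (hy₂ : y₂ = List.formPerm [(4 : Fin n), 3, 2, 1, 0]) :
    Subgroup.closure {x₂, y₂} = alternatingGroup (Fin n) ∧
    y₂ * x₂ = List.formPerm ((2 : Fin n) :: (List.finRange n).drop 4) ∧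
    (y₂ * x₂).IsCycle ∧ (y₂ * x₂).support.card = n - 3 := by
  have v0 : (0 : Fin n).val = 0 := by simp
  have v1 : (1 : Fin n).val = 1 := by rw [Fin.val_one', Nat.mod_eq_of_lt]; omega
  have v2 : (2 : Fin n).val = 2 := by
    show 2 % n = 2; exact Nat.mod_eq_of_lt (by omega)
  have v3 : (3 : Fin n).val = 3 := by
    show 3 % n = 3; exact Nat.mod_eq_of_lt (by omega)
  have v4 : (4 : Fin n).val = 4 := by
    show 4 % n = 4; exact Nat.mod_eq_of_lt (by omega)
  have hY : ∀ i, (y₂ i).val = if i.val = 0 then 4 else if i.val ≤ 4 then i.val - 1 else i.val := by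
    intro i
    rw [hy₂]
    simp only [List.formPerm_cons_cons, List.formPerm_singleton, Equiv.Perm.mul_apply, mul_one,
      Equiv.swap_apply_def]
    grind
  have hX : ∀ i, (x₂ i).val = if i.val < 2 then i.val + 1 else if i.val = 2 then 0 else
      if i.val + 1 = n then 3 else i.val + 1 := by
    intro i
    have hd := aux_formPerm_drop n 3 (by omega) i
    rw [hx₂]
    simp only [List.formPerm_cons_cons, List.formPerm_singleton, Equiv.Perm.mul_apply, mul_one,
      Equiv.swap_apply_def]
    grind
  have hnd3 : ((List.finRange n).drop 3).Nodup := (List.nodup_finRange n).sublist (List.drop_sublist _ _)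
  have hnd4 : ((2 : Fin n) :: (List.finRange n).drop 4).Nodup := by
    rw [List.nodup_cons]
    refine ⟨?_, (List.nodup_finRange n).sublist (List.drop_sublist _ _)⟩
    intro hm
    obtain ⟨j, hj, e⟩ := List.mem_iff_getElem.mp hm
    have := congrArg Fin.val e
    rw [v2] at this
    simp at this
    omega
  have hlen4 : ((2 : Fin n) :: (List.finRange n).drop 4).length = n - 3 := by simp; omega
  have hprod : y₂ * x₂ = List.formPerm ((2 : Fin n) :: (List.finRange n).drop 4) := by
    have hc : (2 : Fin n) :: (List.finRange n).drop 4 = 2 :: 4 :: (List.finRange n).drop 5 := by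
      rw [List.drop_eq_getElem_cons (by simp; omega)]
      congr 2
      ext; rw [v4]; simp
    have hc' : (List.finRange n).drop 4 = 4 :: (List.finRange n).drop 5 := by
      simpa using hc
    rw [hc, List.formPerm_cons_cons, ← hc']
    ext i
    have hd := aux_formPerm_drop n 4 (by omega) i
    have h1 := hX i
    have h2 := hY (x₂ i)
    simp only [Equiv.Perm.mul_apply, Equiv.swap_apply_def]
    grind
  have hcyc : (y₂ * x₂).IsCycle := by
    rw [hprod]; exact List.isCycle_formPerm hnd4 (by omega)
  have hcard : (y₂ * x₂).support.card = n - 3 := by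
    rw [hprod, List.support_formPerm_of_nodup _ hnd4, List.toFinset_card_of_nodup hnd4, hlen4]
    intro x hx
    rw [hx] at hlen4
    simp at hlen4; omega
  refine ⟨?_, hprod, hcyc, hcard⟩
  have hodd : Odd (n - 3) := by
    obtain ⟨k, hk⟩ := heven
    exact ⟨k - 2, by omega⟩
  have sc : Equiv.Perm.sign (y₂ * x₂) = 1 := by
    rw [hcyc.sign, hcard, hodd.neg_one_pow]; simp
  have sy : Equiv.Perm.sign y₂ = 1 := by
    have hnd : [(4 : Fin n), 3, 2, 1, 0].Nodup := by
      simp only [List.nodup_cons, List.mem_cons, Fin.ext_iff, v0, v1, v2, v3, v4]; simp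
    have hcy : y₂.IsCycle := by
      rw [hy₂]; exact List.isCycle_formPerm hnd (by simp)
    rw [hcy.sign, hy₂, List.support_formPerm_of_nodup _ hnd (by simp),
      List.toFinset_card_of_nodup hnd]
    simp; decide
  have sx : Equiv.Perm.sign x₂ = 1 := by
    rw [Equiv.Perm.sign_mul, sy, one_mul] at sc; exact sc
  apply le_antisymm
  · rw [Subgroup.closure_le]
    rintro g (rfl | rfl)
    · exact Equiv.Perm.mem_alternatingGroup.mpr sx
    · exact Equiv.Perm.mem_alternatingGroup.mpr sy
  set H := Subgroup.closure {x₂, y₂} with hH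
  have mx : x₂ ∈ H := Subgroup.subset_closure (by simp)
  have my : y₂ ∈ H := Subgroup.subset_closure (by simp)
  obtain ⟨z, hz⟩ : ∃ z, z = x₂ * y₂ * x₂⁻¹ := ⟨_, rfl⟩
  have mz : z ∈ H := hz ▸ H.mul_mem (H.mul_mem mx my) (H.inv_mem mx)
  have hYi : ∀ i, (y₂⁻¹ i).val = if i.val < 4 then i.val + 1 else if i.val = 4 then 0 else i.val := by
    intro i
    have := hY (y₂⁻¹ i)
    rw [aux_apply_inv] at this
    grind
  have hZ : ∀ i, (z i).val = if i.val = 0 then 2 else if i.val = 1 then 5 else if i.val = 2 then 1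
      else if i.val = 4 then 0 else if i.val = 5 then 4 else i.val := by
    intro i
    have h1 := hX (x₂⁻¹ i)
    rw [aux_apply_inv] at h1
    have h2 := hY (x₂⁻¹ i)
    have h3 := hX (y₂ (x₂⁻¹ i))
    rw [hz, Equiv.Perm.mul_apply, Equiv.Perm.mul_apply]
    have h4 := (x₂⁻¹ i).isLt
    generalize (x₂ (y₂ (x₂⁻¹ i))).val = d at h3 ⊢
    generalize (y₂ (x₂⁻¹ i)).val = b at h2 h3
    generalize (x₂⁻¹ i).val = a at h1 h2 h4
    generalize i.val = e at h1 ⊢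
    clear hX hY hYi
    rw [h3]
    clear h3
    split_ifs at h1 h2 <;> split_ifs <;> omega
  have hZi : ∀ i, (z⁻¹ i).val = if i.val = 2 then 0 else if i.val = 5 then 1 else if i.val = 1 then 2
      else if i.val = 0 then 4 else if i.val = 4 then 5 else i.val := by
    intro i
    have := hZ (z⁻¹ i)
    rw [aux_apply_inv] at this
    clear hZ hYi hX hY
    generalize z⁻¹ i = w at this ⊢
    split_ifs at this <;> split_ifs <;> omega
  have m3 : Equiv.swap (0 : Fin n) 1 * Equiv.swap 1 3 ∈ H := by
    have : Equiv.swap (0 : Fin n) 1 * Equiv.swap 1 3 = z * y₂ * z * y₂⁻¹ * z := by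
      ext i
      have hS : ((Equiv.swap (0 : Fin n) 1 * Equiv.swap 1 3 : Equiv.Perm (Fin n)) i).val =
          if i.val = 0 then 1 else if i.val = 1 then 3 else if i.val = 3 then 0 else i.val := by
        simp only [Equiv.Perm.mul_apply, Equiv.swap_apply_def]
        grind
      rw [hS]
      simp only [Equiv.Perm.mul_apply]
      rcases (by omega : i.val = 0 ∨ i.val = 1 ∨ i.val = 2 ∨ i.val = 3 ∨ i.val = 4 ∨ i.val = 5 ∨
        6 ≤ i.val) with h | h | h | h | h | h | h
      iterate 6 (next => simp only [hZ, hY, hYi, h] <;> rfl)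
      have g0 : i.val ≠ 0 := by omega
      have g1 : i.val ≠ 1 := by omega
      have g2 : i.val ≠ 2 := by omega
      have g3 : i.val ≠ 3 := by omega
      have g4 : i.val ≠ 4 := by omega
      have g5 : i.val ≠ 5 := by omega
      have g6 : ¬ i.val < 4 := by omega
      have g7 : ¬ i.val ≤ 4 := by omega
      simp only [hZ, hY, hYi, g0, g1, g2, g3, g4, g5, g6, g7, if_false]
    rw [this]
    exact H.mul_mem (H.mul_mem (H.mul_mem (H.mul_mem mz my) mz) (H.inv_mem my)) mz
  have m2 : Equiv.swap (0 : Fin n) 1 * Equiv.swap 1 2 ∈ H := by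
    have : Equiv.swap (0 : Fin n) 1 * Equiv.swap 1 2 = y₂⁻¹ * y₂⁻¹ * z * y₂ * z⁻¹ * z⁻¹ := by
      ext i
      have hS : ((Equiv.swap (0 : Fin n) 1 * Equiv.swap 1 2 : Equiv.Perm (Fin n)) i).val =
          if i.val = 0 then 1 else if i.val = 1 then 2 else if i.val = 2 then 0 else i.val := by
        simp only [Equiv.Perm.mul_apply, Equiv.swap_apply_def]
        grind
      rw [hS]
      simp only [Equiv.Perm.mul_apply]
      rcases (by omega : i.val = 0 ∨ i.val = 1 ∨ i.val = 2 ∨ i.val = 3 ∨ i.val = 4 ∨ i.val = 5 ∨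
        6 ≤ i.val) with h | h | h | h | h | h | h
      iterate 6 (next => simp only [hZ, hY, hYi, hZi, h] <;> rfl)
      have g0 : i.val ≠ 0 := by omega
      have g1 : i.val ≠ 1 := by omega
      have g2 : i.val ≠ 2 := by omega
      have g3 : i.val ≠ 3 := by omega
      have g4 : i.val ≠ 4 := by omega
      have g5 : i.val ≠ 5 := by omega
      have g6 : ¬ i.val < 4 := by omega
      have g7 : ¬ i.val ≤ 4 := by omega
      simp only [hZ, hY, hYi, hZi, g0, g1, g2, g3, g4, g5, g6, g7, if_false]
    rw [this]
    exact H.mul_mem (H.mul_mem (H.mul_mem (H.mul_mem (H.mul_mem (H.inv_mem my) (H.inv_mem my)) mz) my)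
      (H.inv_mem mz)) (H.inv_mem mz)
  have hC : ∀ i, ((y₂ * x₂) i).val = if i.val < 2 then i.val else if i.val = 2 then 4 else
      if i.val = 3 then 3 else if i.val + 1 = n then 2 else i.val + 1 := by
    intro i
    have h1 := hX i
    have h2 := hY (x₂ i)
    rw [Equiv.Perm.mul_apply]
    grind
  have mc : y₂ * x₂ ∈ H := H.mul_mem my mx
  have conj : ∀ k : Fin n, Equiv.swap (0 : Fin n) 1 * Equiv.swap 1 k ∈ H →
      Equiv.swap (0 : Fin n) 1 * Equiv.swap 1 ((y₂ * x₂) k) ∈ H := by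
    intro k hk
    have e0 : (y₂ * x₂) 0 = 0 := by ext; rw [hC]; simp
    have e1 : (y₂ * x₂) 1 = 1 := by ext; rw [hC, v1]; simp
    have : Equiv.swap (0 : Fin n) 1 * Equiv.swap 1 ((y₂ * x₂) k) =
        (y₂ * x₂) * (Equiv.swap (0 : Fin n) 1 * Equiv.swap 1 k) * (y₂ * x₂)⁻¹ := by
      generalize y₂ * x₂ = c at e0 e1
      have a1 := Equiv.swap_apply_apply c 0 1
      have a2 := Equiv.swap_apply_apply c 1 k
      rw [e0, e1] at a1
      rw [e1] at a2
      calc _ = (c * Equiv.swap 0 1 * c⁻¹) * (c * Equiv.swap 1 k * c⁻¹) := by rw [← a1, ← a2]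
        _ = _ := by group
    rw [this]
    exact H.mul_mem (H.mul_mem mc hk) (H.inv_mem mc)
  have all4 : ∀ k : ℕ, ∀ hk : k + 4 < n,
      Equiv.swap (0 : Fin n) 1 * Equiv.swap 1 (⟨k + 4, hk⟩ : Fin n) ∈ H := by
    intro k
    induction k with
    | zero =>
      intro hk
      have := conj 2 m2
      have e : (y₂ * x₂) 2 = ⟨0 + 4, hk⟩ := by ext; rw [hC, v2]; simp
      rwa [e] at this
    | succ k ih =>
      intro hk
      have := conj _ (ih (by omega))
      have e : (y₂ * x₂) ⟨k + 4, by omega⟩ = ⟨k + 1 + 4, hk⟩ := by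
        ext; rw [hC]; grind
      rwa [e] at this
  apply aux_three_cycles H 0 1 (by rw [Ne, Fin.ext_iff, v0, v1]; simp)
  intro k hk0 hk1
  have hk0' : k.val ≠ 0 := fun h => hk0 (by ext; simp [h])
  have hk1' : k.val ≠ 1 := fun h => hk1 (by ext; rw [h, v1])
  by_cases h2 : k.val = 2
  · have : k = 2 := by ext; rw [h2, v2]
    rw [this]; exact m2
  by_cases h3 : k.val = 3
  · have : k = 3 := by ext; rw [h3, v3]
    rw [this]; exact m3
  have := all4 (k.val - 4) (by omega)
  have e : (⟨k.val - 4 + 4, by omega⟩ : Fin n) = k := by ext; simp; omega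
  rwa [e] at this
end

section
/- Let n ≥ 8 be even, and in the alternating group A_n on {1,…,n} let x₁ = (1,2)(3,4), y₁ = (2,3,4,…,n), x₂ = (1,2,3)(4,5,…,n) and y₂ = (5,4,3,2,1). Then {(x₁,y₁),(x₂,y₂)} is a Beauville structure for A_n. -/
open Equiv Equiv.Perm

theorem bv_primitive {α : Type*} (G : Subgroup (Perm α)) (p q : α)
    (hst : ∀ a, a ≠ p → ∃ g ∈ G, g p = p ∧ g a = q) (hmv : ∃ g ∈ G, g p ≠ p) :
    MulAction.IsPreprimitive G α := by
  obtain ⟨t, ht, htp⟩ := hmv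
  have h1 : ∀ a, ∃ g ∈ G, g a = p := by
    intro a
    by_cases h : a = p
    · exact ⟨1, G.one_mem, by simp [h]⟩
    · obtain ⟨g, hg, -, hga⟩ := hst a h
      obtain ⟨k, hk, -, hkt⟩ := hst (t p) htp
      refine ⟨t⁻¹ * k⁻¹ * g, G.mul_mem (G.mul_mem (G.inv_mem ht) (G.inv_mem hk)) hg, ?_⟩
      simp [hga, ← hkt]
  have h2 : ∀ a b, a ≠ b → ∃ g ∈ G, g a = p ∧ g b = q := by
    intro a b hab
    obtain ⟨g, hg, hga⟩ := h1 a
    obtain ⟨k, hk, hkp, hkb⟩ := hst (g b) (fun h => hab (g.injective (hga.trans h.symm)))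
    exact ⟨k * g, G.mul_mem hk hg, by simp [hga, hkp], by simp [hkb]⟩
  apply MulAction.isPreprimitive_of_is_two_pretransitive
  rw [MulAction.is_two_pretransitive_iff]
  intro a b c d hab hcd
  obtain ⟨g, hg, hga, hgb⟩ := h2 a b hab
  obtain ⟨k, hk, hkc, hkd⟩ := h2 c d hcd
  refine ⟨⟨k⁻¹ * g, G.mul_mem (G.inv_mem hk) hg⟩, ?_, ?_⟩
  · change (k⁻¹ * g) a = c
    simp [hga, ← hkc]
  · change (k⁻¹ * g) b = d
    simp [hgb, ← hkd]

theorem bv_sameCycle_mem {α : Type*} {G : Subgroup (Perm α)} {f : Perm α} (hf : f ∈ G) {p a q : α}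
    (hp : f p = p) (h : SameCycle f a q) : ∃ g ∈ G, g p = p ∧ g a = q := by
  obtain ⟨i, hi⟩ := h
  exact ⟨f ^ i, G.zpow_mem hf i, zpow_apply_eq_self_of_apply_eq_self hp i, hi⟩

theorem bv_chain {n : ℕ} (f : Perm (Fin n)) (b : ℕ) (hb : b < n)
    (h : ∀ i : Fin n, b ≤ i.val → i.val + 1 < n → (f i).val = i.val + 1) :
    ∀ i : Fin n, b ≤ i.val → SameCycle f ⟨b, hb⟩ i := by
  have key : ∀ k (hk : b + k < n), SameCycle f ⟨b, hb⟩ ⟨b + k, hk⟩ := by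
    intro k
    induction k with
    | zero => intro hk; exact SameCycle.refl _ _
    | succ k ih =>
      intro hk
      have h1 := ih (by omega)
      have h2 : f ⟨b + k, by omega⟩ = ⟨b + (k + 1), hk⟩ := by
        apply Fin.ext
        rw [h _ (by simp) (by simp; omega)]
        simp; omega
      rw [← h2]
      exact sameCycle_apply_right.mpr h1
  intro i hi
  have := key (i.val - b) (by omega)
  convert this using 1
  apply Fin.ext
  simp; omega

theorem bv_pow_fix {α : Type*} {f : Perm α} {i : ℕ} {p q : α} (h : SameCycle f p q)
    (hp : (f ^ i) p = p) : (f ^ i) q = q := by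
  obtain ⟨k, rfl⟩ := h
  rw [← Perm.mul_apply, ← zpow_natCast, ← zpow_add, add_comm, zpow_add, Perm.mul_apply,
    zpow_natCast, hp]

/-- conjugates of powers of a perm fixing `p` and transitive off `p` -/
theorem bv_F1 {α : Type*} (f : Perm α) (p q : α) (hp : f p = p)
    (htr : ∀ a, a ≠ p → SameCycle f q a) (i : ℕ) (g : Perm α) :
    (∃ r, (g * f ^ i * g⁻¹) r = r) ∧
    (∀ r s, r ≠ s → (g * f ^ i * g⁻¹) r = r → (g * f ^ i * g⁻¹) s = s → g * f ^ i * g⁻¹ = 1) := by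
  have hpi : (f ^ i) p = p := pow_apply_eq_self_of_apply_eq_self hp i
  constructor
  · exact ⟨g p, by simp [hpi]⟩
  · intro r s hrs hr hs
    have conv : ∀ t, (g * f ^ i * g⁻¹) t = t → (f ^ i) (g⁻¹ t) = g⁻¹ t := by
      intro t ht
      apply g.injective
      simpa using ht
    have hr' := conv r hr
    have hs' := conv s hs
    have : ∃ t, t ≠ p ∧ (f ^ i) t = t := by
      by_cases h : g⁻¹ r = p
      · refine ⟨g⁻¹ s, fun h' => hrs (g⁻¹.injective (h.trans h'.symm)), hs'⟩
      · exact ⟨_, h, hr'⟩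
    obtain ⟨t, ht, hft⟩ := this
    have : f ^ i = 1 := by
      ext a
      by_cases ha : a = p
      · simp [ha, hpi]
      · simpa using bv_pow_fix ((htr t ht).symm.trans (htr a ha)) hft
    simp [this]

theorem bv_F2a {α : Type*} (f : Perm α) (p q : α) (hpq : p ≠ q) (hp : f p = p) (hq : f q = q)
    (i : ℕ) (g : Perm α) (r : α) : ∃ s, s ≠ r ∧ (g * f ^ i * g⁻¹) s = s := by
  have hpi : (f ^ i) p = p := pow_apply_eq_self_of_apply_eq_self hp i
  have hqi : (f ^ i) q = q := pow_apply_eq_self_of_apply_eq_self hq i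
  by_cases h : g p = r
  · exact ⟨g q, fun h' => hpq (g.injective (h.trans h'.symm)), by simp [hqi]⟩
  · exact ⟨g p, h, by simp [hpi]⟩

theorem bv_inv_self {α : Type*} (f : Perm α) (a : α) : f⁻¹ (f a) = a := by simp

theorem bv_F2b {α : Type*} (f : Perm α) (hf : ∀ a, f a ≠ a)
    (i : ℕ) (g : Perm α) (r : α) (hr : (g * f ^ i * g⁻¹) r = r) :
    ∃ s, s ≠ r ∧ (g * f ^ i * g⁻¹) s = s := by
  have hr' : (f ^ i) (g⁻¹ r) = g⁻¹ r := by
    apply g.injective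
    simpa using hr
  refine ⟨g (f (g⁻¹ r)), fun h => hf (g⁻¹ r) ?_, ?_⟩
  · apply g.injective
    simpa using h
  · have := bv_pow_fix (q := f (g⁻¹ r)) (sameCycle_apply_right.mpr (SameCycle.refl f _)) hr'
    rw [Perm.mul_apply, Perm.mul_apply, bv_inv_self, this]

theorem bv_conj_pow {G : Type*} [Group G] (f g : G) (i N : ℕ) (h : f ^ N = 1) :
    (g * f ^ i * g⁻¹) ^ N = 1 := by
  rw [conj_pow, ← pow_mul, mul_comm, pow_mul, h]; simp

theorem bv_odd {G : Type*} [Group G] (a : G) (N : ℕ) (hN : Odd N) (h2 : a ^ 2 = 1)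
    (h : a ^ N = 1) : a = 1 := by
  obtain ⟨k, rfl⟩ := hN
  rw [pow_add, pow_mul, h2] at h
  simpa using h

theorem bv_sign {n : ℕ} (f : Perm (Fin n)) (N : ℕ) (hN : Odd N) (h : f ^ N = 1) :
    f ∈ alternatingGroup (Fin n) := by
  rw [mem_alternatingGroup]
  apply bv_odd _ N hN
  · exact Int.units_sq _
  · rw [← map_pow, h, map_one]

theorem bv_tail {n : ℕ} (k : ℕ) (hk : k + 2 ≤ n) (i : Fin n) :
    (List.formPerm ((List.finRange n).drop k) i).val =
      if i.val < k then i.val else if i.val + 1 < n then i.val + 1 else k := by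
  have hnd : ((List.finRange n).drop k).Nodup := (List.nodup_finRange n).sublist (List.drop_sublist _ _)
  have hlen : ((List.finRange n).drop k).length = n - k := by simp
  by_cases hi : i.val < k
  · rw [if_pos hi, List.formPerm_apply_of_notMem]
    intro hmem
    obtain ⟨j, hj, rfl⟩ := List.getElem_of_mem hmem
    simp at hi
  · have e : i = ((List.finRange n).drop k)[i.val - k]'(by rw [hlen]; omega) := by
      apply Fin.ext
      simp; omega
    rw [if_neg hi]
    conv_lhs => rw [e]
    rw [List.formPerm_apply_getElem _ hnd]
    simp only [List.getElem_drop, List.getElem_finRange, hlen, Fin.val_cast]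
    split_ifs with h
    · rw [Nat.mod_eq_of_lt (by omega)]; omega
    · have : i.val - k + 1 = n - k := by omega
      rw [this, Nat.mod_self]; omega

theorem bv_tail_pow {n : ℕ} (k : ℕ) :
    (List.formPerm ((List.finRange n).drop k)) ^ (n - k) = 1 := by
  have hnd : ((List.finRange n).drop k).Nodup := (List.nodup_finRange n).sublist (List.drop_sublist _ _)
  have := List.formPerm_pow_length_eq_one_of_nodup _ hnd
  simpa using this

set_option maxHeartbeats 2000000 in
/-- for even `n ≥ 8`, the pairs `x₁ = (1,2)(3,4)`, `y₁ = (2,3,4,…,n)` and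
`x₂ = (1,2,3)(4,5,…,n)`, `y₂ = (5,4,3,2,1)` form a Beauville structure for `A_n`.
Points `1,…,n` are modelled by `Fin n` (zero-based). -/
theorem alternatingGroup_even_beauville_structure
    (n : ℕ) [NeZero n] (hn : 8 ≤ n) (heven : Even n)
    (x₁ y₁ x₂ y₂ : Equiv.Perm (Fin n))
    (hx₁ : x₁ = Equiv.swap (0 : Fin n) 1 * Equiv.swap 2 3)
    (hy₁ : y₁ = List.formPerm ((List.finRange n).drop 1))
    (hx₂ : x₂ = List.formPerm [(0 : Fin n), 1, 2] * List.formPerm ((List.finRange n).drop 3))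
    (hy₂ : y₂ = List.formPerm [(4 : Fin n), 3, 2, 1, 0]) :
    IsBeauvilleStructureFor (alternatingGroup (Fin n)) x₁ y₁ x₂ y₂ := by
  have v0 : ((0 : Fin n) : ℕ) = 0 := by simp
  have v1 : ((1 : Fin n) : ℕ) = 1 := by
    change 1 % n = 1
    exact Nat.mod_eq_of_lt (by omega)
  have v2 : ((2 : Fin n) : ℕ) = 2 := by
    change 2 % n = 2
    exact Nat.mod_eq_of_lt (by omega)
  have v3 : ((3 : Fin n) : ℕ) = 3 := by
    change 3 % n = 3
    exact Nat.mod_eq_of_lt (by omega)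
  have v4 : ((4 : Fin n) : ℕ) = 4 := by
    change 4 % n = 4
    exact Nat.mod_eq_of_lt (by omega)
  have v5 : ((5 : Fin n) : ℕ) = 5 := by
    change 5 % n = 5
    exact Nat.mod_eq_of_lt (by omega)
  have v6 : ((6 : Fin n) : ℕ) = 6 := by
    change 6 % n = 6
    exact Nat.mod_eq_of_lt (by omega)
  have sv : ∀ a b i : Fin n, (Equiv.swap a b i).val =
      if i.val = a.val then b.val else if i.val = b.val then a.val else i.val := by
    intro a b i
    simp only [Equiv.swap_apply_def, Fin.ext_iff]
    split_ifs <;> rfl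
  -- value formulas
  have hx₁v : ∀ i, (x₁ i).val = if i.val = 0 then 1 else if i.val = 1 then 0 else
      if i.val = 2 then 3 else if i.val = 3 then 2 else i.val := by
    intro i
    rw [hx₁]
    simp only [Perm.mul_apply, sv, v0, v1, v2, v3]
    grind
  have hy₁v : ∀ i, (y₁ i).val = if i.val = 0 then 0 else if i.val + 1 < n then i.val + 1 else 1 := by
    intro i
    rw [hy₁, bv_tail 1 (by omega)]
    grind
  have hAv : ∀ i, (List.formPerm [(0 : Fin n), 1, 2] i).val = if i.val = 0 then 1 else
      if i.val = 1 then 2 else if i.val = 2 then 0 else i.val := by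
    intro i
    simp only [List.formPerm_cons_cons, List.formPerm_singleton, mul_one, Perm.mul_apply, sv,
      v0, v1, v2]
    grind
  have hBv := bv_tail (n := n) 3 (by omega)
  have hx₂v : ∀ i, (x₂ i).val = if i.val = 0 then 1 else if i.val = 1 then 2 else
      if i.val = 2 then 0 else if i.val + 1 < n then i.val + 1 else 3 := by
    intro i
    rw [hx₂, Perm.mul_apply, hAv, hBv]
    grind
  have hy₂v : ∀ i, (y₂ i).val = if i.val = 0 then 4 else if i.val ≤ 4 then i.val - 1 else i.val := by
    intro i
    rw [hy₂]
    simp only [List.formPerm_cons_cons, List.formPerm_singleton, mul_one, Perm.mul_apply, sv,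
      v0, v1, v2, v3, v4]
    have : i.val = 0 ∨ i.val = 1 ∨ i.val = 2 ∨ i.val = 3 ∨ i.val = 4 ∨ 5 ≤ i.val := by omega
    rcases this with h | h | h | h | h | h
    iterate 5 simp [h]
    have e0 : i.val ≠ 0 := by omega
    have e1 : i.val ≠ 1 := by omega
    have e2 : i.val ≠ 2 := by omega
    have e3 : i.val ≠ 3 := by omega
    have e4 : i.val ≠ 4 := by omega
    have e5 : ¬ i.val ≤ 4 := by omega
    simp [e0, e1, e2, e3, e4, e5]
  have hwv : ∀ i, ((x₁ * y₁) i).val = if i.val = 0 then 1 else if i.val = 1 then 3 else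
      if i.val = 2 then 2 else if i.val + 1 < n then i.val + 1 else 0 := by
    intro i
    rw [Perm.mul_apply, hx₁v, hy₁v]
    grind
  have hzv : ∀ i, ((x₂ * y₂) i).val = if i.val = 0 then 5 else if i.val = 1 then 1 else
      if i.val = 2 then 2 else if i.val = 3 then 0 else if i.val = 4 then 4 else
      if i.val + 1 < n then i.val + 1 else 3 := by
    intro i
    rw [Perm.mul_apply, hx₂v, hy₂v]
    grind
  -- cycles
  have cy₁ : ∀ a, a ≠ 0 → SameCycle y₁ 1 a := by
    intro a ha
    have ha' : a.val ≠ 0 := fun h => ha (Fin.ext (h.trans v0.symm))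
    have := bv_chain y₁ 1 (by omega) (by
      intro i h1 h2; rw [hy₁v, if_neg (by omega), if_pos h2]) a (by omega)
    convert this using 1
    exact Fin.ext v1
  have cw : ∀ a, a ≠ 2 → SameCycle (x₁ * y₁) 3 a := by
    intro a ha
    have ha' : a.val ≠ 2 := fun h => ha (Fin.ext (h.trans v2.symm))
    have hch : ∀ a : Fin n, 3 ≤ a.val → SameCycle (x₁ * y₁) 3 a := by
      intro a ha
      have := bv_chain (x₁ * y₁) 3 (by omega) (by
        intro i h1 h2
        rw [hwv, if_neg (by omega), if_neg (by omega), if_neg (by omega), if_pos h2]) a ha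
      convert this using 1
      exact Fin.ext v3
    have h1 : SameCycle (x₁ * y₁) 3 1 := by
      rw [← sameCycle_apply_right]
      exact hch _ (by rw [hwv, v1]; simp)
    have h0 : SameCycle (x₁ * y₁) 3 0 := by
      rw [← sameCycle_apply_right]
      convert h1 using 1
      apply Fin.ext
      rw [hwv, v0, v1]; simp
    have : a.val = 0 ∨ a.val = 1 ∨ 3 ≤ a.val := by omega
    rcases this with h | h | h
    · rwa [show a = 0 from Fin.ext (h.trans v0.symm)]
    · rwa [show a = 1 from Fin.ext (h.trans v1.symm)]
    · exact hch a h
  have cz : ∀ a, a ≠ 1 → a ≠ 2 → a ≠ 4 → SameCycle (x₂ * y₂) 5 a := by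
    intro a ha1 ha2 ha4
    have ha1' : a.val ≠ 1 := fun h => ha1 (Fin.ext (h.trans v1.symm))
    have ha2' : a.val ≠ 2 := fun h => ha2 (Fin.ext (h.trans v2.symm))
    have ha4' : a.val ≠ 4 := fun h => ha4 (Fin.ext (h.trans v4.symm))
    have hch : ∀ a : Fin n, 5 ≤ a.val → SameCycle (x₂ * y₂) 5 a := by
      intro a ha
      have := bv_chain (x₂ * y₂) 5 (by omega) (by
        intro i h1 h2
        rw [hzv, if_neg (by omega), if_neg (by omega), if_neg (by omega), if_neg (by omega),
          if_neg (by omega), if_pos h2]) a ha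
      convert this using 1
      exact Fin.ext v5
    have h0 : SameCycle (x₂ * y₂) 5 0 := by
      rw [← sameCycle_apply_right]
      exact hch _ (by rw [hzv, v0]; simp)
    have h3 : SameCycle (x₂ * y₂) 5 3 := by
      rw [← sameCycle_apply_right]
      convert h0 using 1
      apply Fin.ext
      rw [hzv, v0, v3]; simp
    have : a.val = 0 ∨ a.val = 3 ∨ 5 ≤ a.val := by omega
    rcases this with h | h | h
    · rwa [show a = 0 from Fin.ext (h.trans v0.symm)]
    · rwa [show a = 3 from Fin.ext (h.trans v3.symm)]
    · exact hch a h
  have fy₁ : y₁ 0 = 0 := Fin.ext (by rw [hy₁v, v0]; simp)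
  have fw : (x₁ * y₁) 2 = 2 := Fin.ext (by rw [hwv, v2]; simp)
  have fz1 : (x₂ * y₂) 1 = 1 := Fin.ext (by rw [hzv, v1]; simp)
  have fz2 : (x₂ * y₂) 2 = 2 := Fin.ext (by rw [hzv, v2]; simp)
  have fz4 : (x₂ * y₂) 4 = 4 := Fin.ext (by rw [hzv, v4]; simp)
  have fy5 : y₂ 5 = 5 := Fin.ext (by rw [hy₂v, v5]; simp)
  have fy6 : y₂ 6 = 6 := Fin.ext (by rw [hy₂v, v6]; simp)
  have n12 : (1 : Fin n) ≠ 2 := fun h => by have := congrArg Fin.val h; omega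
  have n56 : (5 : Fin n) ≠ 6 := fun h => by have := congrArg Fin.val h; omega
  -- orders
  have ox₁ : x₁ ^ 2 = 1 := by
    ext i
    rw [pow_two, Perm.mul_apply, hx₁v, hx₁v, Perm.one_apply]
    grind
  have odd1 : Odd (n - 1) := by obtain ⟨k, hk⟩ := heven; exact ⟨k - 1, by omega⟩
  have odd3 : Odd (n - 3) := by obtain ⟨k, hk⟩ := heven; exact ⟨k - 2, by omega⟩
  have oy₁ : y₁ ^ (n - 1) = 1 := by rw [hy₁]; exact bv_tail_pow 1
  have ox₂ : x₂ ^ (3 * (n - 3)) = 1 := by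
    have hA : (List.formPerm [(0 : Fin n), 1, 2]) ^ 3 = 1 := by
      ext i
      simp only [pow_succ, pow_zero, one_mul, Perm.mul_apply, hAv, Perm.one_apply]
      grind
    have hdis : Perm.Disjoint (List.formPerm [(0 : Fin n), 1, 2])
        (List.formPerm ((List.finRange n).drop 3)) := by
      intro i
      by_cases h : i.val < 3
      · right
        apply Fin.ext
        rw [hBv, if_pos h]
      · left
        apply Fin.ext
        rw [hAv, if_neg (by omega), if_neg (by omega), if_neg (by omega)]
    rw [hx₂, hdis.commute.mul_pow, pow_mul, hA, mul_comm 3, pow_mul, bv_tail_pow 3]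
    simp
  have oy₂ : y₂ ^ 5 = 1 := by
    ext i
    have : i.val = 0 ∨ i.val = 1 ∨ i.val = 2 ∨ i.val = 3 ∨ i.val = 4 ∨ 5 ≤ i.val := by omega
    simp only [pow_succ, pow_zero, one_mul, Perm.mul_apply, hy₂v, Perm.one_apply]
    rcases this with h | h | h | h | h | h
    iterate 5 simp [h]
    have e0 : i.val ≠ 0 := by omega
    have e5 : ¬ i.val ≤ 4 := by omega
    simp [e0, e5]
  have oz : (x₂ * y₂) ^ (n - 3) = 1 := by
    have hsupp : (x₂ * y₂).support = ({1, 2, 4} : Finset (Fin n))ᶜ := by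
      ext i
      simp only [Perm.mem_support, Finset.mem_compl, Finset.mem_insert, Finset.mem_singleton, ne_eq,
        Fin.ext_iff, hzv, v1, v2, v4]
      grind
    have hcyc : (x₂ * y₂).IsCycle := by
      refine ⟨5, ?_, ?_⟩
      · intro h
        have := congrArg Fin.val h
        rw [hzv, v5] at this
        simp at this
        split_ifs at this <;> omega
      · intro a ha
        apply cz <;> rintro rfl <;> contradiction
    have hc := hcyc.orderOf
    have hcard : ({1, 2, 4} : Finset (Fin n)).card = 3 := by
      rw [Finset.card_eq_three]
      refine ⟨1, 2, 4, n12, ?_, ?_, rfl⟩ <;> intro h <;> have := congrArg Fin.val h <;> omega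
    rw [hsupp, Finset.card_compl, hcard, Fintype.card_fin] at hc
    rw [← hc]
    exact pow_orderOf_eq_one _
  have oddx₂ : Odd (3 * (n - 3)) := Odd.mul (by decide) odd3
  refine ⟨?_, ?_, ?_⟩
  · -- first generation
    apply le_antisymm
    · rw [Subgroup.closure_le]
      rintro a (rfl | rfl)
      · have h01 : (0 : Fin n) ≠ 1 := fun h => by have := congrArg Fin.val h; omega
        have h23 : (2 : Fin n) ≠ 3 := fun h => by have := congrArg Fin.val h; omega
        rw [SetLike.mem_coe, mem_alternatingGroup, hx₁, Perm.sign_mul, sign_swap h01, sign_swap h23]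
        rfl
      · exact bv_sign _ _ odd1 oy₁
    · have mx : x₁ ∈ Subgroup.closure {x₁, y₁} := Subgroup.subset_closure (by simp)
      have my : y₁ ∈ Subgroup.closure {x₁, y₁} := Subgroup.subset_closure (by simp)
      have n04 : (0 : Fin n) ≠ 4 := fun h => by have := congrArg Fin.val h; omega
      have n01 : (0 : Fin n) ≠ 1 := fun h => by have := congrArg Fin.val h; omega
      have n41 : (4 : Fin n) ≠ 1 := fun h => by have := congrArg Fin.val h; omega
      have h3 := isThreeCycle_swap_mul_swap_same n04 n01 n41
      refine alternatingGroup_le_of_isPreprimitive_of_isThreeCycle_mem ?_ h3 ?_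
      · refine bv_primitive _ 0 1 ?_ ⟨x₁, mx, ?_⟩
        · intro a ha
          exact bv_sameCycle_mem my fy₁ (cy₁ a ha).symm
        · intro h
          have := congrArg Fin.val h
          rw [hx₁v, v0] at this
          simp at this
      · have hc : y₁ ^ 3 * x₁ * (y₁ ^ 3)⁻¹ = swap 0 4 * swap 5 6 := by
          rw [mul_inv_eq_iff_eq_mul]
          have hy3 : ∀ i, ((y₁ ^ 3) i).val = if i.val = 0 then 0 else if i.val + 3 < n then i.val + 3
              else i.val + 3 + 1 - n := by
            intro i
            simp only [pow_succ, pow_zero, one_mul, Perm.mul_apply, hy₁v]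
            grind
          ext i
          simp only [Perm.mul_apply, sv, hy3, hx₁v, v0, v4, v5, v6]
          grind
        have : swap 0 4 * swap 0 1 = (x₁ * (y₁ ^ 3 * x₁ * (y₁ ^ 3)⁻¹)) ^ 2 := by
          rw [hc]
          have hu : ∀ i : Fin n, ((x₁ * (swap 0 4 * swap 5 6) : Perm (Fin n)) i).val = if i.val = 0 then 4 else
              if i.val = 1 then 0 else if i.val = 2 then 3 else if i.val = 3 then 2 else
              if i.val = 4 then 1 else if i.val = 5 then 6 else if i.val = 6 then 5 else i.val := by
            intro i
            simp only [Perm.mul_apply, sv, hx₁v, v0, v4, v5, v6]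
            have : i.val = 0 ∨ i.val = 1 ∨ i.val = 2 ∨ i.val = 3 ∨ i.val = 4 ∨ i.val = 5 ∨
              i.val = 6 ∨ 7 ≤ i.val := by omega
            rcases this with h | h | h | h | h | h | h | h
            iterate 7 simp [h]
            have e0 : i.val ≠ 0 := by omega
            have e1 : i.val ≠ 1 := by omega
            have e2 : i.val ≠ 2 := by omega
            have e3 : i.val ≠ 3 := by omega
            have e4 : i.val ≠ 4 := by omega
            have e5 : i.val ≠ 5 := by omega
            have e6 : i.val ≠ 6 := by omega
            simp [e0, e1, e2, e3, e4, e5, e6]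
          ext i
          rw [pow_two, Perm.mul_apply, Perm.mul_apply (x₁ * _), hu, hu, sv, sv, v0, v1, v4]
          have : i.val = 0 ∨ i.val = 1 ∨ i.val = 2 ∨ i.val = 3 ∨ i.val = 4 ∨ i.val = 5 ∨
            i.val = 6 ∨ 7 ≤ i.val := by omega
          rcases this with h | h | h | h | h | h | h | h
          iterate 7 simp [h]
          have e0 : i.val ≠ 0 := by omega
          have e1 : i.val ≠ 1 := by omega
          have e2 : i.val ≠ 2 := by omega
          have e3 : i.val ≠ 3 := by omega
          have e4 : i.val ≠ 4 := by omega
          have e5 : i.val ≠ 5 := by omega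
          have e6 : i.val ≠ 6 := by omega
          simp [e0, e1, e2, e3, e4, e5, e6]
        rw [this]
        have m3 := pow_mem my 3
        exact pow_mem (mul_mem mx (mul_mem (mul_mem m3 mx) (inv_mem m3))) 2
  · -- second generation
    apply le_antisymm
    · rw [Subgroup.closure_le]
      rintro a (rfl | rfl)
      · exact bv_sign _ _ oddx₂ ox₂
      · exact bv_sign _ 5 (by decide) oy₂
    · have mx : x₂ ∈ Subgroup.closure {x₂, y₂} := Subgroup.subset_closure (by simp)
      have my : y₂ ∈ Subgroup.closure {x₂, y₂} := Subgroup.subset_closure (by simp)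
      have mz := mul_mem mx my
      have n34 : (3 : Fin n) ≠ 4 := fun h => by have := congrArg Fin.val h; omega
      have n35 : (3 : Fin n) ≠ 5 := fun h => by have := congrArg Fin.val h; omega
      have n45 : (4 : Fin n) ≠ 5 := fun h => by have := congrArg Fin.val h; omega
      have n51 : (5 : Fin n) ≠ 1 := fun h => by have := congrArg Fin.val h; omega
      have h3 := isThreeCycle_swap_mul_swap_same n34 n35 n45
      have y21 : y₂ 2 = 1 := Fin.ext (by rw [hy₂v, v2, v1]; simp)
      have y04 : y₂ 0 = 4 := Fin.ext (by rw [hy₂v, v0, v4]; simp)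
      have y32 : y₂ 3 = 2 := Fin.ext (by rw [hy₂v, v3, v2]; simp)
      refine alternatingGroup_le_of_isPreprimitive_of_isThreeCycle_mem ?_ h3 ?_
      · refine bv_primitive _ 1 5 ?_ ⟨y₂, my, ?_⟩
        · have mh := mul_mem (mul_mem my mz) (inv_mem my)
          have fh : (y₂ * (x₂ * y₂) * y₂⁻¹) 1 = 1 := by
            conv_lhs => rw [← y21]
            rw [Perm.mul_apply, bv_inv_self, Perm.mul_apply, fz2, y21]
          have ch : ∀ a, a ≠ 1 → a ≠ 2 → a ≠ 4 → SameCycle (y₂ * (x₂ * y₂) * y₂⁻¹) 5 (y₂ a) := by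
            intro a h1 h2 h4
            rw [sameCycle_conj, bv_inv_self]
            convert cz a h1 h2 h4 using 1
            rw [Perm.inv_eq_iff_eq, fy5]
          have n0 : (0 : Fin n) ≠ 1 ∧ (0 : Fin n) ≠ 2 ∧ (0 : Fin n) ≠ 4 := by
            refine ⟨?_, ?_, ?_⟩ <;> intro h <;> have := congrArg Fin.val h <;> omega
          have n3 : (3 : Fin n) ≠ 1 ∧ (3 : Fin n) ≠ 2 ∧ (3 : Fin n) ≠ 4 := by
            refine ⟨?_, ?_, ?_⟩ <;> intro h <;> have := congrArg Fin.val h <;> omega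
          intro a ha
          by_cases h2 : a = 2
          · subst h2
            refine bv_sameCycle_mem mh fh ?_
            rw [← y32]
            exact (ch 3 n3.1 n3.2.1 n3.2.2).symm
          by_cases h4 : a = 4
          · subst h4
            refine bv_sameCycle_mem mh fh ?_
            rw [← y04]
            exact (ch 0 n0.1 n0.2.1 n0.2.2).symm
          exact bv_sameCycle_mem mz fz1 (cz a ha h2 h4).symm
        · intro h
          have := congrArg Fin.val h
          rw [hy₂v, v1] at this
          simp at this
      · have hc : ∀ i, ((x₂ * y₂ * x₂⁻¹) i).val = if i.val = 0 then 2 else if i.val = 1 then 5 else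
            if i.val = 2 then 1 else if i.val = 3 then 3 else if i.val = 4 then 0 else
            if i.val = 5 then 4 else i.val := by
          intro i
          obtain ⟨a, rfl⟩ := x₂.surjective i
          rw [Perm.mul_apply, bv_inv_self, Perm.mul_apply, hx₂v, hx₂v, hy₂v]
          have l4 : 4 < n := by omega
          have l5 : 5 < n := by omega
          have : a.val = 0 ∨ a.val = 1 ∨ a.val = 2 ∨ a.val = 3 ∨ a.val = 4 ∨ 5 ≤ a.val := by omega
          rcases this with h | h | h | h | h | h
          iterate 5 simp [h, l4, l5]
          have e0 : a.val ≠ 0 := by omega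
          have e1 : a.val ≠ 1 := by omega
          have e2 : a.val ≠ 2 := by omega
          have e3 : a.val ≠ 3 := by omega
          have e4 : a.val ≠ 4 := by omega
          have e6 : ¬ a.val ≤ 4 := by omega
          by_cases hl : a.val + 1 < n
          · simp [e0, e1, e2, e3, e4, e6, hl]
          · simp [e0, e1, e2, e6, hl]
        have : swap 3 4 * swap 3 5 = y₂ * (x₂ * y₂ * x₂⁻¹) * (y₂ ^ 2 * (x₂ * y₂ * x₂⁻¹) ^ 4) := by
          generalize x₂ * y₂ * x₂⁻¹ = c at hc
          ext i
          simp only [pow_succ, pow_zero, one_mul, Perm.mul_apply, hy₂v, hc, sv, v3, v4, v5]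
          have : i.val = 0 ∨ i.val = 1 ∨ i.val = 2 ∨ i.val = 3 ∨ i.val = 4 ∨ i.val = 5 ∨
            6 ≤ i.val := by omega
          rcases this with h | h | h | h | h | h | h
          iterate 6 simp [h]
          have e0 : i.val ≠ 0 := by omega
          have e1 : i.val ≠ 1 := by omega
          have e2 : i.val ≠ 2 := by omega
          have e3 : i.val ≠ 3 := by omega
          have e4 : i.val ≠ 4 := by omega
          have e5 : i.val ≠ 5 := by omega
          have e6 : ¬ i.val ≤ 4 := by omega
          simp [e0, e1, e2, e3, e4, e5, e6]
        rw [this]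
        have mc := mul_mem mz (inv_mem mx)
        exact mul_mem (mul_mem my mc) (mul_mem (pow_mem my 2) (pow_mem mc 4))
  · -- trivial intersection
    ext a
    simp only [Set.mem_inter_iff, Set.mem_singleton_iff]
    constructor
    · rintro ⟨⟨i, g, -, h1⟩, ⟨j, k, -, h2⟩⟩
      have F2 : ∀ r, a r = r → ∃ s, s ≠ r ∧ a s = s := by
        rcases h2 with rfl | rfl | rfl
        · apply bv_F2b
          intro b hb
          have := congrArg Fin.val hb
          rw [hx₂v] at this
          split_ifs at this <;> omega
        · intro r _
          exact bv_F2a y₂ 5 6 n56 fy5 fy6 j k r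
        · intro r _
          exact bv_F2a (x₂ * y₂) 1 2 n12 fz1 fz2 j k r
      have F1 : ∀ (f : Perm (Fin n)) (p q : Fin n), f p = p → (∀ b, b ≠ p → SameCycle f q b) →
          a = g * f ^ i * g⁻¹ → a = 1 := by
        intro f p q hp ht ha
        obtain ⟨⟨r, hr⟩, hrs⟩ := bv_F1 f p q hp ht i g
        rw [← ha] at hr hrs
        obtain ⟨s, hs, hs'⟩ := F2 r hr
        exact hrs r s hs.symm hr hs'
      rcases h1 with h1 | h1 | h1
      · have h2' : a ^ 2 = 1 := by rw [h1]; exact bv_conj_pow _ _ _ _ ox₁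
        rcases h2 with h2 | h2 | h2
        · exact bv_odd a _ oddx₂ h2' (by rw [h2]; exact bv_conj_pow _ _ _ _ ox₂)
        · exact bv_odd a 5 (by decide) h2' (by rw [h2]; exact bv_conj_pow _ _ _ _ oy₂)
        · exact bv_odd a _ odd3 h2' (by rw [h2]; exact bv_conj_pow _ _ _ _ oz)
      · exact F1 y₁ 0 1 fy₁ cy₁ h1
      · exact F1 (x₁ * y₁) 2 3 fw cw h1
    · rintro rfl
      exact ⟨⟨0, 1, Subgroup.one_mem _, by simp⟩, ⟨0, 1, Subgroup.one_mem _, by simp⟩⟩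
end
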